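/- arXiv:2006.16213 — 2 statements merged into one kernel-verified Lean document; each statement's English description precedes it below -/
import Mathlib

section
/- Let F : [0,∞) → [0,∞). Then: (1) F∘Λ is a one-sided Pólya frequency function for every one-sided Pólya frequency function Λ if and only if F(x) = c·x for some c > 0; (2) F∘f is a one-sided TN function that is non-zero at two or more points whenever f is a one-sided TN function that is non-zero at two or more points, if and only if F(x) = c·x, F(x) = c·1_{x>0}, or F(x) = c·1_{x=0} for some c > 0; (3) if F is non-zero, then F∘f is a one-sided TN function whenever f is a one-sided TN function, if and only if F(x) = c·x or F(x) = c·1_{x>0} for some c > 0. -/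
/-- A kernel on linearly ordered sets is totally non-negative if all matrices
obtained by evaluating it on increasing tuples have non-negative determinant. -/
def IsTNKernel {X Y : Type*} [LinearOrder X] [LinearOrder Y] (K : X → Y → ℝ) : Prop :=
  ∀ (n : ℕ) (x : Fin n → X) (y : Fin n → Y), StrictMono x → StrictMono y →
    0 ≤ (Matrix.of fun i j : Fin n => K (x i) (y j)).det

/-- A TN function: a Lebesgue-measurable function whose associated Toeplitz
kernel is totally non-negative. -/
def IsTNFun (f : ℝ → ℝ) : Prop :=
  Measurable f ∧ IsTNKernel fun x y : ℝ => f (x - y)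

/-- A Pólya frequency function: an integrable TN function taking values in
`[0,∞)` that is non-zero at two or more points. -/
def IsPolyaFrequencyFunction (Λ : ℝ → ℝ) : Prop :=
  MeasureTheory.Integrable Λ ∧ (∀ x, 0 ≤ Λ x) ∧
  (∃ a b : ℝ, a ≠ b ∧ Λ a ≠ 0 ∧ Λ b ≠ 0) ∧
  IsTNKernel fun x y : ℝ => Λ (x - y)

/-- A function is one-sided if it vanishes on `(−∞, x₀)` or on `(x₀, ∞)` for
some `x₀`. -/
def OneSided (f : ℝ → ℝ) : Prop :=
  ∃ x₀ : ℝ, (∀ x, x < x₀ → f x = 0) ∨ (∀ x, x₀ < x → f x = 0)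

/-!
Let `F` preserve one-sided TN functions and be non-zero somewhere on `(0,∞)`. Its images of
`t e^{-u} 1_{u ≥ 0}` and `t u e^{-αu} 1_{u > 0}` show that `F 0 = 0` and that `F` is positive and
non-decreasing on `(0,∞)`. Positivity rests on the fact that a TN function with bounded support is
non-zero at no more than one point: by variation diminution, a finite Pólya frequency sequence has a
real-rooted generating polynomial, and Newton's inequalities on ever finer grids are then violated.
As all truncations `F(e^{-s-u}) 1_{u ≥ 0}` are TN, their minors of order two and three make
`log F(e^{-x})` affine, that is `F x = c x ^ β`.

To find `β`, apply `F` to `e^{-u} P(e^{-u}) 1_{u > 0}` with `P = 1 - w` and `P = 1 - 3 w² + 2 w³`.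
Far out, the minors of the image on an arithmetic progression have the sign of the product of the
leading coefficients of the expansion of `P ^ β` at `w = 0`, up to the sign of a reversal. These
products are `β² (1 - β) / 2` and `27 β³ (1 - β)`, and the signs `-1` and `1` of the reversals of
three and four points leave only `β = 0` and `β = 1`.
-/

open MeasureTheory Set

/-! ### Totally non-negative kernels -/

namespace IsTNKernel

variable {X Y : Type*} [LinearOrder X] [LinearOrder Y] {K : X → Y → ℝ}

theorem comp_strictMono {X' Y' : Type*} [LinearOrder X'] [LinearOrder Y'] (hK : IsTNKernel K)
    {φ : X' → X} {ψ : Y' → Y} (hφ : StrictMono φ) (hψ : StrictMono ψ) :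
    IsTNKernel fun x y => K (φ x) (ψ y) :=
  fun n _ _ hx hy => hK n _ _ (hφ.comp hx) (hψ.comp hy)

theorem comp_strictAnti {X' Y' : Type*} [LinearOrder X'] [LinearOrder Y'] (hK : IsTNKernel K)
    {φ : X' → X} {ψ : Y' → Y} (hφ : StrictAnti φ) (hψ : StrictAnti ψ) :
    IsTNKernel fun x y => K (φ x) (ψ y) := by
  intro n x y hx hy
  have hrev : StrictAnti (Fin.rev : Fin n → Fin n) := Fin.rev_strictAnti
  rw [← Matrix.det_submatrix_equiv_self Fin.revPerm]
  exact hK n _ _ (hφ.comp (hx.comp_strictAnti hrev)) (hψ.comp (hy.comp_strictAnti hrev))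

theorem mul_mul (hK : IsTNKernel K) {φ : X → ℝ} {ψ : Y → ℝ} (hφ : ∀ x, 0 ≤ φ x)
    (hψ : ∀ y, 0 ≤ ψ y) : IsTNKernel fun x y => φ x * K x y * ψ y := by
  intro n x y hx hy
  have hfactor : (Matrix.of fun i j => φ (x i) * K (x i) (y j) * ψ (y j)) =
      Matrix.diagonal (fun i => φ (x i)) * (Matrix.of fun i j => K (x i) (y j)) *
        Matrix.diagonal fun j => ψ (y j) := by
    ext i j
    simp only [Matrix.mul_diagonal, Matrix.diagonal_mul, Matrix.of_apply]
  rw [hfactor, Matrix.det_mul, Matrix.det_mul, Matrix.det_diagonal, Matrix.det_diagonal]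
  exact mul_nonneg (mul_nonneg (Finset.prod_nonneg fun _ _ => hφ _) (hK n x y hx hy))
    (Finset.prod_nonneg fun _ _ => hψ _)

theorem const_mul (hK : IsTNKernel K) {c : ℝ} (hc : 0 ≤ c) : IsTNKernel fun x y => c * K x y := by
  simpa using hK.mul_mul (φ := fun _ => c) (ψ := fun _ => 1) (fun _ => hc) fun _ => zero_le_one

-- Expand along the first row: if it has two non-zero entries then the first two columns agree.
theorem indicator {s : X → Set Y} (hs : Monotone s) (hlower : ∀ x, IsLowerSet (s x)) :
    IsTNKernel fun x => (s x).indicator (1 : Y → ℝ) := by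
  intro n
  induction n with
  | zero => simp
  | succ n ih =>
    intro x y hx hy
    have hmono {i j k : Fin (n + 1)} (hj : y j ∈ s (x i)) (hi : i ≤ k) : y j ∈ s (x k) :=
      hs (hx.monotone hi) hj
    by_cases h₀ : y 0 ∈ s (x 0)
    · by_cases h₁ : ∃ j : Fin n, y j.succ ∈ s (x 0)
      · obtain ⟨j, hj⟩ := h₁
        refine (Matrix.det_zero_of_column_eq (Fin.succ_ne_zero j).symm fun k => ?_).ge
        simp [hmono h₀ (Fin.zero_le k), hmono hj (Fin.zero_le k)]
      · push Not at h₁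
        rw [Matrix.det_succ_row_zero, Fin.sum_univ_succ]
        have hminor := ih (x ∘ Fin.succ) (y ∘ Fin.succ) (hx.comp Fin.strictMono_succ)
          (hy.comp Fin.strictMono_succ)
        simpa [h₀, h₁, Matrix.submatrix, Function.comp_def] using hminor
    · refine (Matrix.det_eq_zero_of_row_eq_zero 0 fun j => ?_).ge
      exact indicator_of_notMem (fun h => h₀ (hlower _ (hy.monotone (Fin.zero_le j)) h)) _

end IsTNKernel

/-! ### The basic composition formula -/

section Andreief

theorem intCast_sign_mul_self {ι : Type*} [Fintype ι] [DecidableEq ι] (σ : Equiv.Perm ι) :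
    ((σ.sign : ℤ) : ℝ) * ((σ.sign : ℤ) : ℝ) = 1 := by
  rw [← Int.cast_mul, Int.units_coe_mul_self, Int.cast_one]

variable {α ι : Type*} [MeasurableSpace α] {μ : Measure α} [SigmaFinite μ] [Fintype ι]
  [DecidableEq ι]

theorem integrable_sign_mul_prod {f : ι → ι → α → ℝ} (hf : ∀ i j, Integrable (f i j) μ)
    (σ : Equiv.Perm ι) :
    Integrable (fun v : ι → α => ((σ.sign : ℤ) : ℝ) * ∏ j, f (σ j) j (v j))
      (Measure.pi fun _ => μ) :=
  (Integrable.fintype_prod fun j => hf (σ j) j).const_mul _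

theorem integrable_det {f : ι → ι → α → ℝ} (hf : ∀ i j, Integrable (f i j) μ) :
    Integrable (fun v : ι → α => (Matrix.of fun i j => f i j (v j)).det)
      (Measure.pi fun _ => μ) := by
  simp only [Matrix.det_apply', Matrix.of_apply]
  exact integrable_finsetSum _ fun σ _ => integrable_sign_mul_prod hf σ

theorem integral_det {f : ι → ι → α → ℝ} (hf : ∀ i j, Integrable (f i j) μ) :
    ∫ v : ι → α, (Matrix.of fun i j => f i j (v j)).det ∂(Measure.pi fun _ => μ) =
      (Matrix.of fun i j => ∫ v, f i j v ∂μ).det := by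
  simp only [Matrix.det_apply', Matrix.of_apply]
  rw [integral_finsetSum _ fun σ _ => integrable_sign_mul_prod hf σ]
  refine Finset.sum_congr rfl fun σ _ => ?_
  rw [integral_const_mul, integral_fintype_prod_eq_prod]

/-- Andréief's identity. -/
theorem integral_det_mul_det {φ ψ : ι → α → ℝ} (h : ∀ i j, Integrable (fun v => φ i v * ψ j v) μ) :
    ∫ v : ι → α, (Matrix.of fun i j => φ i (v j)).det * (Matrix.of fun i j => ψ j (v i)).det
        ∂(Measure.pi fun _ => μ) =
      (Fintype.card ι).factorial * (Matrix.of fun i j => ∫ v, φ i v * ψ j v ∂μ).det := by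
  have hexpand (v : ι → α) :
      (Matrix.of fun i j => φ i (v j)).det * (Matrix.of fun i j => ψ j (v i)).det =
        ∑ σ : Equiv.Perm ι, ((σ.sign : ℤ) : ℝ) *
          (Matrix.of fun i j => φ (σ j) (v j) * ψ i (v j)).det := by
    rw [← Matrix.det_transpose (Matrix.of fun i j => ψ j (v i)), Matrix.det_apply',
      Finset.sum_mul]
    refine Finset.sum_congr rfl fun σ _ => ?_
    rw [mul_assoc]
    exact congrArg _ (Matrix.det_mul_row _ _).symm
  simp_rw [hexpand]
  have hcols (σ : Equiv.Perm ι) : (Matrix.of fun i j => ∫ v, φ (σ j) v * ψ i v ∂μ).det =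
      ((σ.sign : ℤ) : ℝ) * (Matrix.of fun i j => ∫ v, φ i v * ψ j v ∂μ).det := by
    rw [← Matrix.det_transpose]
    exact Matrix.det_permute σ (Matrix.of fun i j => ∫ v, φ i v * ψ j v ∂μ)
  rw [integral_finsetSum _ fun σ _ => (integrable_det fun i j => h (σ j) i).const_mul _]
  simp_rw [integral_const_mul, integral_det fun i _ => h _ i, hcols, ← mul_assoc,
    intCast_sign_mul_self, one_mul]
  rw [Finset.sum_const, Finset.card_univ, Fintype.card_perm, nsmul_eq_mul]

end Andreief

namespace IsTNKernel

variable {X Y Z : Type*} [LinearOrder X] [LinearOrder Y] [LinearOrder Z] {K : X → Y → ℝ}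

theorem det_mul_det_nonneg {L : Y → Z → ℝ} (hK : IsTNKernel K) (hL : IsTNKernel L) {n : ℕ}
    {x : Fin n → X} {z : Fin n → Z} (hx : StrictMono x) (hz : StrictMono z) (v : Fin n → Y) :
    0 ≤ (Matrix.of fun i j => K (x i) (v j)).det * (Matrix.of fun i j => L (v i) (z j)).det := by
  by_cases hv : v.Injective
  · set σ := Tuple.sort v
    have hsort : StrictMono (v ∘ σ) :=
      (Tuple.monotone_sort v).strictMono_of_injective (hv.comp σ.injective)
    have hKσ := hK n x (v ∘ σ) hx hsort
    have hLσ := hL n (v ∘ σ) z hsort hz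
    have hdetK := Matrix.det_permute' σ (Matrix.of fun i j => K (x i) (v j))
    have hdetL := Matrix.det_permute σ (Matrix.of fun i j => L (v i) (z j))
    refine (mul_nonneg hKσ hLσ).trans_eq ?_
    refine (congrArg₂ (· * ·) hdetK hdetL).trans ?_
    rw [mul_mul_mul_comm, intCast_sign_mul_self, one_mul]
  · obtain ⟨i, j, hij, hne⟩ := Function.not_injective_iff.1 hv
    refine (mul_eq_zero_of_right _ (Matrix.det_zero_of_row_eq hne ?_)).ge
    ext k
    simp [hij]

theorem integral_mul [MeasurableSpace Y] {μ : Measure Y} [SigmaFinite μ] {L : Y → Z → ℝ}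
    (hK : IsTNKernel K) (hL : IsTNKernel L)
    (hint : ∀ x z, Integrable (fun v => K x v * L v z) μ) :
    IsTNKernel fun x z => ∫ v, K x v * L v z ∂μ := by
  intro n x z hx hz
  have handreief := integral_det_mul_det (φ := fun i => K (x i)) (ψ := fun j v => L v (z j))
    fun i j => hint (x i) (z j)
  have hnonneg : 0 ≤ ∫ v : Fin n → Y, (Matrix.of fun i j => K (x i) (v j)).det *
      (Matrix.of fun i j => L (v i) (z j)).det ∂(Measure.pi fun _ => μ) :=
    integral_nonneg fun v => hK.det_mul_det_nonneg hL hx hz v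
  rw [handreief] at hnonneg
  exact (mul_nonneg_iff_of_pos_left (Nat.cast_pos.2 (Nat.factorial_pos _))).1 hnonneg

end IsTNKernel

/-! ### Toeplitz kernels -/

/-- Total non-negativity of the Toeplitz kernel `(x, y) ↦ f (x - y)` on an ordered abelian group;
on `ℝ` it is the kernel condition of TN functions, on `ℤ` that of Pólya frequency sequences. -/
def IsTNToeplitz {G : Type*} [LinearOrder G] [Sub G] (f : G → ℝ) : Prop :=
  IsTNKernel fun x y : G => f (x - y)

namespace IsTNToeplitz

section

variable {G : Type*} [LinearOrder G] [AddCommGroup G] {f : G → ℝ}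

theorem nonneg (hf : IsTNToeplitz f) (x : G) : 0 ≤ f x := by
  simpa using hf 1 (fun _ => x) (fun _ => 0) (Subsingleton.strictMono _) (Subsingleton.strictMono _)

theorem const_mul (hf : IsTNToeplitz f) {c : ℝ} (hc : 0 ≤ c) : IsTNToeplitz fun x => c * f x :=
  IsTNKernel.const_mul hf hc

end

variable {G : Type*} [LinearOrder G] [AddCommGroup G] [IsOrderedAddMonoid G] {f : G → ℝ}

theorem mul_le_mul (hf : IsTNToeplitz f) {a b c d : G} (hab : a < b) (hbd : b < d)
    (h : a + d = b + c) : f a * f d ≤ f b * f c := by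
  have hdet := hf 2 ![b, d] ![0, b - a] (by simpa [Fin.strictMono_iff_lt_succ] using hbd)
    (by simpa [Fin.strictMono_iff_lt_succ] using hab)
  have hc : d - (b - a) = c := by rw [sub_sub_eq_add_sub, add_comm d a, h, add_sub_cancel_left]
  simp only [Matrix.det_fin_two, Matrix.of_apply, Matrix.cons_val_zero, Matrix.cons_val_one,
    sub_zero, sub_sub_cancel, hc] at hdet
  linarith

theorem ordConnected_support (hf : IsTNToeplitz f) : (Function.support f).OrdConnected := by
  refine ordConnected_of_Ioo fun a ha b hb _ d hd hfd => ?_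
  have hle := hf.mul_le_mul hd.1 hd.2 (add_sub_cancel d (a + b)).symm
  rw [hfd, zero_mul] at hle
  exact hle.not_gt (mul_pos ((hf.nonneg a).lt_of_ne' ha) ((hf.nonneg b).lt_of_ne' hb))

theorem comp_neg (hf : IsTNToeplitz f) : IsTNToeplitz fun x => f (-x) := by
  have h := IsTNKernel.comp_strictAnti hf (φ := fun x => -x) (ψ := fun x => -x)
    (fun _ _ => neg_lt_neg) fun _ _ => neg_lt_neg
  simpa only [IsTNToeplitz, neg_sub_neg, neg_sub] using h

theorem exp_mul {f : ℝ → ℝ} (hf : IsTNToeplitz f) (α : ℝ) :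
    IsTNToeplitz fun x => Real.exp (α * x) * f x := by
  have h := IsTNKernel.mul_mul hf (φ := fun x => Real.exp (α * x))
    (ψ := fun y => Real.exp (-(α * y))) (fun _ => (Real.exp_pos _).le) fun _ => (Real.exp_pos _).le
  have hsplit (x y : ℝ) : Real.exp (α * (x - y)) = Real.exp (α * x) * Real.exp (-(α * y)) := by
    rw [← Real.exp_add, mul_sub, sub_eq_add_neg]
  simpa only [IsTNToeplitz, hsplit, mul_right_comm] using h

theorem indicator_isUpperSet {s : Set G} (hs : IsUpperSet s) :
    IsTNToeplitz (s.indicator (1 : G → ℝ)) :=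
  IsTNKernel.indicator (s := fun x => {y | x - y ∈ s})
    (fun _ _ h _ hy => hs (sub_le_sub_right h _) hy) fun _ _ _ h hy => hs (sub_le_sub_left h _) hy

theorem indicator_isLowerSet {s : Set G} (hs : IsLowerSet s) :
    IsTNToeplitz (s.indicator (1 : G → ℝ)) := by
  have h : IsTNToeplitz ({x | -x ∈ s}.indicator (1 : G → ℝ)) :=
    indicator_isUpperSet fun _ _ hab ha => hs (neg_le_neg hab) ha
  convert h.comp_neg using 2 with x
  by_cases hx : x ∈ s <;> simp [hx]

end IsTNToeplitz

/-! ### Variation diminution -/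

theorem exists_mulVec_succAbove_eq {ι : Type*} {n : ℕ} (A : Matrix ι (Fin (n + 1)) ℝ)
    {v : Fin (n + 1) → ℝ} (hv : v ≠ 0) (hAv : A.mulVec v = 0) (e : Fin (n + 1) → ℝ) :
    ∃ (b : Fin (n + 1)) (e' : Fin n → ℝ),
      (A.submatrix id b.succAbove).mulVec e' = A.mulVec e := by
  obtain ⟨b, hb⟩ := Function.ne_iff.1 hv
  set t := e b / v b
  have ht : e b - t * v b = 0 := by rw [div_mul_cancel₀ _ hb, sub_self]
  refine ⟨b, fun c => e (b.succAbove c) - t * v (b.succAbove c), ?_⟩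
  rw [← sub_zero (A.mulVec e), ← smul_zero t, ← hAv, ← Matrix.mulVec_smul, ← Matrix.mulVec_sub]
  ext i
  simp only [Matrix.mulVec, dotProduct, Fin.sum_univ_succAbove _ b, Pi.sub_apply, Pi.smul_apply,
    smul_eq_mul, ht, mul_zero, zero_add, Matrix.submatrix_apply, id]

theorem alternating_sum_mulVec_mul_det_eq_zero {n : ℕ} (A : Matrix (Fin (n + 1)) (Fin n) ℝ)
    (e : Fin n → ℝ) :
    ∑ i : Fin (n + 1), (-1) ^ (i : ℕ) * A.mulVec e i * (A.submatrix i.succAbove id).det = 0 := by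
  let M : Matrix (Fin (n + 1)) (Fin (n + 1)) ℝ :=
    Matrix.of fun i => Fin.snoc (A i) (A.mulVec e i)
  have hM : M.det = 0 := by
    refine Matrix.exists_mulVec_eq_zero_iff.1 ⟨Fin.snoc e (-1), fun h => ?_, ?_⟩
    · simpa using congrFun h (Fin.last _)
    · ext i
      simp [Matrix.mulVec, dotProduct, Fin.sum_univ_castSucc, M]
  have hminor (i : Fin (n + 1)) :
      M.submatrix i.succAbove (Fin.last n).succAbove = A.submatrix i.succAbove id := by
    ext r c
    simp [M]
  have hsign : (-1 : ℝ) ^ n ≠ 0 := pow_ne_zero _ (by norm_num)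
  rw [Matrix.det_succ_column M (Fin.last _)] at hM
  refine (mul_eq_zero.1 ?_).resolve_left hsign
  rw [← hM, Finset.mul_sum]
  refine Finset.sum_congr rfl fun i _ => ?_
  simp only [hminor, M, Matrix.of_apply, Fin.snoc_last, Fin.val_last, pow_add]
  ring

namespace IsTNKernel

-- Bordering `A` by the column `A e` gives a singular matrix whose expansion along that column has
-- non-negative terms, so a maximal minor vanishes and one column of `A` can be eliminated.
theorem not_alternating_mulVec {B : ℕ} {A : Matrix (Fin (B + 1)) (Fin B) ℝ} (hA : IsTNKernel A)
    (e : Fin B → ℝ) : ¬ ∀ i : Fin (B + 1), 0 < (-1) ^ (i : ℕ) * A.mulVec e i := by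
  induction B with
  | zero => exact fun h => by simpa [Matrix.mulVec] using h 0
  | succ B ih =>
    intro h
    have hminor (i : Fin (B + 2)) : 0 ≤ (A.submatrix i.succAbove id).det :=
      hA _ i.succAbove id (Fin.strictMono_succAbove i) strictMono_id
    have hzero : (A.submatrix (Fin.last _).succAbove id).det = 0 :=
      (mul_eq_zero.1 <| (Finset.sum_eq_zero_iff_of_nonneg fun i _ =>
        mul_nonneg (h i).le (hminor i)).1 (alternating_sum_mulVec_mul_det_eq_zero A e)
          (Fin.last _) (Finset.mem_univ _)).resolve_left (h _).ne'
    obtain ⟨v, hv, hAv⟩ := Matrix.exists_mulVec_eq_zero_iff.2 hzero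
    obtain ⟨b, e', he'⟩ := exists_mulVec_succAbove_eq _ hv hAv e
    refine ih (A := (A.submatrix (Fin.last _).succAbove id).submatrix id b.succAbove)
      (hA.comp_strictMono (Fin.strictMono_succAbove _) (Fin.strictMono_succAbove b)) e' fun i => ?_
    rw [he']
    simpa [Matrix.mulVec, dotProduct] using h i.castSucc

variable {X Y Z : Type*} [LinearOrder X] [LinearOrder Y] [LinearOrder Z] {K : X → Y → ℝ}

theorem sum_mul {L : Y → Z → ℝ} (hK : IsTNKernel K) (hL : IsTNKernel L) (s : Finset Y) :
    IsTNKernel fun x z => ∑ j ∈ s, K x j * L j z := by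
  let : MeasurableSpace Y := ⊤
  have hdirac (g : Y → ℝ) (j : Y) : Integrable g (Measure.dirac j) := integrable_dirac (by simp)
  have h := hK.integral_mul (μ := ∑ j ∈ s, Measure.dirac j) hL fun x z =>
    integrable_finsetSum_measure.2 fun j _ => hdirac _ j
  simpa [integral_finsetSum_measure, hdirac] using h

theorem ite_eq {m : Y → Z} (hm : Monotone m) :
    IsTNKernel fun y z => if m y = z then (1 : ℝ) else 0 := by
  intro n y z hy hz
  by_cases hrow : ∃ i, ∀ k, m (y i) ≠ z k
  · obtain ⟨i, hi⟩ := hrow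
    exact (Matrix.det_eq_zero_of_row_eq_zero i fun k => if_neg (hi k)).ge
  · push Not at hrow
    choose p hp using hrow
    have hpmono : Monotone p := fun i j hij => hz.le_iff_le.1 <| by
      rw [← hp, ← hp]
      exact hm (hy.monotone hij)
    by_cases hinj : p.Injective
    · have hpid : p = id :=
        (hpmono.strictMono_of_injective hinj).range_inj strictMono_id |>.1 <| by
          rw [(Finite.surjective_of_injective hinj).range_eq, range_id]
      have hone : (Matrix.of fun i j => if m (y i) = z j then (1 : ℝ) else 0) = 1 := by
        ext i j
        simp [hp, hpid, hz.injective.eq_iff, Matrix.one_apply]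
      rw [hone, Matrix.det_one]
      exact zero_le_one
    · obtain ⟨i, j, hij, hne⟩ := Function.not_injective_iff.1 hinj
      refine (Matrix.det_zero_of_row_eq hne ?_).ge
      ext k
      simp [hp, hij]

theorem not_alternating_sum (hK : IsTNKernel K) {s : Finset Y} {m : Y → ℕ} {B : ℕ}
    (hm : Monotone m) (hmB : ∀ j ∈ s, m j < B) {v : Y → ℝ}
    (hv : ∀ j ∈ s, 0 ≤ (-1) ^ m j * v j) {x : Fin (B + 1) → X} (hx : StrictMono x) :
    ¬ ∀ i : Fin (B + 1), 0 < (-1) ^ (i : ℕ) * ∑ j ∈ s, K (x i) j * v j := by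
  have hA : IsTNKernel fun (i : Fin (B + 1)) (b : Fin B) =>
      ∑ j ∈ s, K (x i) j * (|v j| * (if m j = b then 1 else 0) * 1) :=
    ((hK.comp_strictMono hx strictMono_id).sum_mul
      ((ite_eq hm).mul_mul (fun j => abs_nonneg (v j)) fun _ => zero_le_one) s).comp_strictMono
      strictMono_id Fin.val_strictMono
  have habs {j : Y} (hj : j ∈ s) : |v j| * (-1) ^ m j = v j := by
    have h := hv j hj
    rcases neg_one_pow_eq_or ℝ (m j) with h₁ | h₁ <;> rw [h₁] at h ⊢
    · rw [mul_one, abs_of_nonneg (by linarith)]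
    · rw [abs_of_nonpos (by linarith), mul_neg_one, neg_neg]
  intro h
  refine hA.not_alternating_mulVec (fun b => (-1) ^ (b : ℕ)) fun i => (h i).trans_eq ?_
  simp only [Matrix.mulVec, dotProduct, Finset.sum_mul]
  rw [Finset.sum_comm]
  congr 1
  refine Finset.sum_congr rfl fun j hj => ?_
  rw [Finset.sum_eq_single ⟨m j, hmB j hj⟩ (fun b _ hb => ?_) (by simp)]
  · simp [mul_assoc, habs hj]
  · have hne : m j ≠ b := fun h => hb (Fin.ext h.symm)
    simp [hne]

end IsTNKernel

/-! ### Real-rootedness of generating polynomials -/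

section GeneratingPolynomial

open Polynomial

/-- The coefficient sequence of a polynomial, extended by zero to the negative integers. -/
def intCoeff (p : ℝ[X]) (k : ℤ) : ℝ :=
  if 0 ≤ k then p.coeff k.toNat else 0

theorem intCoeff_sub_natCast (p : ℝ[X]) {i j : ℕ} (hji : j ≤ i) :
    intCoeff p (i - j) = p.coeff (i - j) := by
  rw [← Nat.cast_sub hji, intCoeff, if_pos (Int.natCast_nonneg _), Int.toNat_natCast]

theorem intCoeff_of_neg (p : ℝ[X]) {k : ℤ} (hk : k < 0) : intCoeff p k = 0 :=
  if_neg hk.not_ge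

theorem sum_intCoeff_sub_mul_pow {A : Type*} [Field A] [Algebra ℝ A] {p : ℝ[X]} {M i : ℕ}
    (hi : p.natDegree ≤ i) (hiM : i < M) {z : A} (hz : z ≠ 0) :
    ∑ j ∈ Finset.range M, algebraMap ℝ A (intCoeff p (i - j)) * z ^ j =
      z ^ i * aeval z⁻¹ p := by
  rw [aeval_eq_sum_range' (Nat.lt_succ_of_le hi), ← Finset.sum_flip, Finset.mul_sum]
  symm
  refine Finset.sum_subset_zero_on_sdiff (Finset.range_mono hiM) (fun j hj => ?_) fun j hj => ?_
  · have hij : (i : ℤ) - j < 0 := by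
      have := (Finset.mem_sdiff.1 hj).2
      simp only [Finset.mem_range] at this
      omega
    rw [intCoeff_of_neg p hij, map_zero, zero_mul]
  · have hji : j ≤ i := Nat.lt_succ_iff.1 (Finset.mem_range.1 hj)
    have hpow : z ^ i = z ^ (i - j) * z ^ j := by rw [← pow_add, Nat.sub_add_cancel hji]
    rw [intCoeff_sub_natCast p hji, Algebra.smul_def, inv_pow, hpow]
    field_simp

theorem exists_sin_nat_mul_add_ne_zero (φ : ℝ) : ∃ α > 0, ∀ j : ℕ, Real.sin (j * φ + α) ≠ 0 := by
  have hcount : (⋃ j : ℕ, ⋃ m : ℤ, {(m : ℝ) * Real.pi - j * φ}).Countable :=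
    countable_iUnion fun _ => countable_iUnion fun _ => countable_singleton _
  obtain ⟨α, hα, hpos⟩ := (hcount.dense_compl ℝ).exists_mem_open isOpen_Ioi (nonempty_Ioi (a := 0))
  refine ⟨α, hpos, fun j hj => hα ?_⟩
  obtain ⟨m, hm⟩ := Real.sin_eq_zero_iff.1 hj
  exact mem_iUnion₂.2 ⟨j, m, by rw [mem_singleton_iff, hm]; ring⟩

theorem neg_one_pow_floor_mul_sin_nonneg {y : ℝ} (hy : 0 ≤ y) :
    0 ≤ (-1) ^ ⌊y / Real.pi⌋₊ * Real.sin y := by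
  rw [← Real.sin_sub_nat_mul_pi]
  have hle := (le_div_iff₀ Real.pi_pos).1 (Nat.floor_le (div_nonneg hy Real.pi_pos.le))
  have hlt := (div_lt_iff₀ Real.pi_pos).1 (Nat.lt_floor_add_one (y / Real.pi))
  exact Real.sin_nonneg_of_nonneg_of_le_pi (by linarith) (by linarith)

theorem im_pow_mul_exp (w : ℂ) (α : ℝ) (j : ℕ) :
    (w ^ j * Complex.exp (α * Complex.I)).im = ‖w‖ ^ j * Real.sin (j * w.arg + α) := by
  have hpolar : w ^ j * Complex.exp (α * Complex.I) =
      ((‖w‖ ^ j : ℝ) : ℂ) * Complex.exp (((j * w.arg + α : ℝ) : ℂ) * Complex.I) := by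
    conv_lhs => rw [← Complex.norm_mul_exp_arg_mul_I w]
    rw [mul_pow, ← Complex.exp_nat_mul, mul_assoc, ← Complex.exp_add]
    push_cast
    ring_nf
  rw [hpolar, Complex.im_ofReal_mul, Complex.exp_ofReal_mul_I_im]

-- The argument of `w ^ j` grows by less than `π` per step, so the `n + B + 1` terms of a rotated
-- geometric sequence have fewer than `B` sign changes once `B` is large.
theorem exists_few_sign_changes {w : ℂ} (hw : 0 < w.im) (n : ℕ) :
    ∃ (ζ : ℂ) (m : ℕ → ℕ) (B : ℕ), Monotone m ∧ (∀ j ≤ n + B, m j < B) ∧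
      ∀ j, 0 < (-1) ^ m j * (w ^ j * ζ).im := by
  have hπ := Real.pi_pos
  set φ := w.arg
  have hφ₀ : 0 ≤ φ := Complex.arg_nonneg_iff.2 hw.le
  have hφπ : φ < Real.pi := Complex.arg_lt_pi_iff.2 (Or.inr hw.ne')
  have hw₀ : 0 < ‖w‖ := norm_pos_iff.2 fun h => by simp [h] at hw
  obtain ⟨α, hα, hsin⟩ := exists_sin_nat_mul_add_ne_zero φ
  obtain ⟨B, hB⟩ := exists_nat_gt ((n * φ + α) / (Real.pi - φ))
  rw [div_lt_iff₀ (by linarith)] at hB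
  have hangle (j : ℕ) : 0 ≤ j * φ + α := by positivity
  refine ⟨Complex.exp (α * Complex.I), fun j => ⌊(j * φ + α) / Real.pi⌋₊, B, fun i j hij => ?_,
    fun j hj => ?_, fun j => ?_⟩
  · dsimp only
    gcongr
  · rw [Nat.floor_lt (div_nonneg (hangle j) hπ.le), div_lt_iff₀ hπ]
    have hj' : (j : ℝ) ≤ n + B := by exact_mod_cast hj
    nlinarith
  · rw [im_pow_mul_exp, mul_left_comm]
    exact mul_pos (pow_pos hw₀ j) <| (neg_one_pow_floor_mul_sin_nonneg (hangle j)).lt_of_ne'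
      (mul_ne_zero (pow_ne_zero _ (by norm_num)) (hsin j))

theorem exists_pos_add_mul_pos {ι : Type*} {s : Finset ι} {u : ι → ℝ} (hu : ∀ j ∈ s, 0 < u j)
    (v : ι → ℝ) : ∃ η > 0, ∀ j ∈ s, 0 < u j + η * v j := by
  have hnear : ∀ᶠ η in nhdsWithin (0 : ℝ) (Ioi 0), ∀ j ∈ s, 0 < u j + η * v j := by
    refine (Filter.eventually_all_finset s).2 fun j hj => ?_
    have hcont : ContinuousAt (fun η : ℝ => u j + η * v j) 0 := by fun_prop
    exact (hcont.eventually_const_lt (by simpa using hu j hj)).filter_mono nhdsWithin_le_nhds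
  obtain ⟨η, hη, hpos⟩ := (hnear.and self_mem_nhdsWithin).exists
  exact ⟨η, hpos, hη⟩

-- With `w⁻¹` a root, the oscillating sequence `Im (w ^ j ζ)` is annihilated by the convolution;
-- a small multiple of the alternating sequence `t⁻¹ ^ j` then violates variation diminution.
theorem IsTNToeplitz.aeval_inv_ne_zero {p : ℝ[X]} (hp : IsTNToeplitz (intCoeff p)) {t : ℝ}
    (ht : t < 0) (hpt : p.eval t ≠ 0) {w : ℂ} (hw : 0 < w.im) : aeval w⁻¹ p ≠ 0 := by
  intro hroot
  set n := p.natDegree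
  set κ := t⁻¹ ^ n * p.eval t with hκ
  have hκ₀ : κ ≠ 0 := mul_ne_zero (pow_ne_zero _ (inv_ne_zero ht.ne)) hpt
  have hw₀ : w ≠ 0 := fun h => by simp [h] at hw
  obtain ⟨ζ, m, B, hm, hmB, hsign⟩ := exists_few_sign_changes hw n
  obtain ⟨η, hη, hpos⟩ := exists_pos_add_mul_pos (s := Finset.range (n + B + 1))
    (fun j _ => hsign j) fun j => (-1) ^ m j * (κ * t⁻¹ ^ j)
  have hosc {i : ℕ} (hi : n ≤ i) (hiB : i < n + B + 1) :
      ∑ j ∈ Finset.range (n + B + 1), intCoeff p (i - j) * (w ^ j * ζ).im = 0 := by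
    have h := congrArg (fun z => (z * ζ).im) (sum_intCoeff_sub_mul_pow hi hiB hw₀)
    simpa [hroot, Finset.sum_mul, mul_assoc] using h
  have halt {i : ℕ} (hi : n ≤ i) (hiB : i < n + B + 1) :
      ∑ j ∈ Finset.range (n + B + 1), intCoeff p (i - j) * t⁻¹ ^ j = t⁻¹ ^ i * p.eval t := by
    simpa using sum_intCoeff_sub_mul_pow hi hiB (inv_ne_zero ht.ne)
  refine (IsTNKernel.comp_strictMono hp strictMono_id Nat.strictMono_cast).not_alternating_sum
    (s := Finset.range (n + B + 1)) (v := fun j => (w ^ j * ζ).im + η * (κ * t⁻¹ ^ j))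
    (x := fun r : Fin (B + 1) => ((n + r : ℕ) : ℤ)) hm
    (fun j hj => hmB j (Finset.mem_range_succ_iff.1 hj))
    (fun j hj => (hpos j hj).le.trans_eq (by ring)) (fun r r' h => by simpa using h) fun r => ?_
  have hsum : ∑ j ∈ Finset.range (n + B + 1),
      intCoeff p ((n + r : ℕ) - j) * ((w ^ j * ζ).im + η * (κ * t⁻¹ ^ j)) =
        η * κ * (t⁻¹ ^ (n + r : ℕ) * p.eval t) := by
    simp only [mul_add, Finset.sum_add_distrib]
    rw [hosc (by omega) (by omega), zero_add, ← halt (by omega) (by omega), Finset.mul_sum]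
    exact Finset.sum_congr rfl fun j _ => by ring
  have hpow : (-1) ^ (r : ℕ) * (η * κ * (t⁻¹ ^ (n + r : ℕ) * p.eval t)) =
      η * κ ^ 2 * (-t⁻¹) ^ (r : ℕ) := by
    rw [pow_add, neg_pow t⁻¹, hκ]
    ring
  have ht' : 0 < -t⁻¹ := neg_pos.2 (inv_lt_zero.2 ht)
  exact (by positivity : 0 < η * κ ^ 2 * (-t⁻¹) ^ (r : ℕ)).trans_eq
    (hpow.symm.trans (congrArg _ hsum.symm))

theorem IsTNToeplitz.splits {p : ℝ[X]} (hp : IsTNToeplitz (intCoeff p)) : p.Splits := by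
  rcases eq_or_ne p 0 with rfl | hp₀
  · exact Splits.zero
  obtain ⟨t, ht, hpt⟩ : ∃ t < 0, p.eval t ≠ 0 := by
    by_contra! h
    exact hp₀ (eq_zero_of_infinite_isRoot p ((Iio_infinite 0).mono h))
  have hupper {z : ℂ} (hz : z.im < 0) : aeval z p ≠ 0 := by
    have hinv : 0 < z⁻¹.im := by
      rw [Complex.inv_im]
      exact div_pos (neg_pos.2 hz) (Complex.normSq_pos.2 fun h => by simp [h] at hz)
    simpa using hp.aeval_inv_ne_zero ht hpt hinv
  refine (IsAlgClosed.splits (p.map (algebraMap ℝ ℂ))).of_splits_map _ fun z hz => ?_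
  have hroot : aeval z p = 0 := by
    rw [← eval_map_algebraMap]
    exact (mem_roots'.1 hz).2
  have hconj : aeval (starRingEnd ℂ z) p = 0 := by
    rw [aeval_conj, hroot, map_zero]
  have him : z.im = 0 := by
    rcases lt_trichotomy z.im 0 with h | h | h
    · exact absurd hroot (hupper h)
    · exact h
    · exact absurd hconj (hupper (by simpa using h))
  exact ⟨z.re, Complex.ext rfl him.symm⟩

theorem derivative_splits {p : ℝ[X]} (hp : p.Splits) : (derivative p).Splits := by
  rw [splits_iff_card_roots] at hp ⊢
  have h₁ := card_roots_le_derivative p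
  have h₂ := natDegree_derivative_le p
  have h₃ := card_roots' (derivative p)
  omega

theorem laguerre_inequality {p : ℝ[X]} (hp : p.Splits) (x : ℝ) :
    p.eval x * (derivative (derivative p)).eval x ≤ (derivative p).eval x ^ 2 := by
  induction hp using Submonoid.closure_induction with
  | mem p hp => rcases hp with ⟨a, rfl⟩ | ⟨a, rfl⟩ <;> simp
  | one => simp
  | mul p q _ _ hp hq =>
    simp only [derivative_mul, derivative_add, eval_mul, eval_add]
    linarith [mul_le_mul_of_nonneg_left hp (sq_nonneg (q.eval x)),
      mul_le_mul_of_nonneg_left hq (sq_nonneg (p.eval x))]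

theorem newton_inequality {p : ℝ[X]} (hp : p.Splits) (k : ℕ) :
    (k.factorial * p.coeff k) * ((k + 2).factorial * p.coeff (k + 2)) ≤
      ((k + 1).factorial * p.coeff (k + 1)) ^ 2 := by
  have hsplits : (derivative^[k] p).Splits := by
    induction k with
    | zero => exact hp
    | succ k ih => exact Function.iterate_succ_apply' derivative k p ▸ derivative_splits ih
  have heval (j : ℕ) : (derivative^[j] p).eval 0 = j.factorial * p.coeff j := by
    simp [← coeff_zero_eq_eval_zero, coeff_iterate_derivative, Nat.descFactorial_self]
  have h := laguerre_inequality hsplits 0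
  simpa only [← Function.iterate_succ_apply' derivative, heval] using h

end GeneratingPolynomial

/-! ### Supports of one-sided TN functions -/

theorem mul_le_sq_of_mul_le_sq {B : ℕ → ℝ} {m : ℕ} (hpos : ∀ i ≤ 2 * m, 0 < B i)
    (h : ∀ i, i + 2 ≤ 2 * m → B i * B (i + 2) ≤ B (i + 1) ^ 2) : B 0 * B (2 * m) ≤ B m ^ 2 := by
  have hratio (i j : ℕ) (hij : i ≤ j) (hj : j + 1 ≤ 2 * m) :
      B i * B (j + 1) ≤ B (i + 1) * B j := by
    induction j, hij using Nat.le_induction with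
    | base => rw [mul_comm]
    | succ j hij ih =>
      refine le_of_mul_le_mul_right ?_ (hpos j (by omega))
      nlinarith [mul_le_mul_of_nonneg_left (h j hj) (hpos i (by omega)).le,
        mul_le_mul_of_nonneg_left (ih (by omega)) (hpos (j + 1) (by omega)).le]
  have hshift (l : ℕ) (hl : l ≤ m) : B 0 * B (m + l) ≤ B l * B m := by
    induction l with
    | zero => rfl
    | succ l ih =>
      rw [← add_assoc]
      refine le_of_mul_le_mul_right ?_ (hpos (m + l) (by omega))
      nlinarith [mul_le_mul_of_nonneg_left (ih (by omega)) (hpos (m + l + 1) (by omega)).le,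
        mul_le_mul_of_nonneg_left (hratio l (m + l) (by omega) (by omega))
          (hpos m (by omega)).le]
  rw [two_mul, sq]
  exact hshift m le_rfl

theorem add_two_pow_mul_factorial_sq_le (T m : ℕ) :
    (T + 2) ^ m * (T * m + m).factorial ^ 2 ≤
      (T + 1) ^ m * ((T * m).factorial * (T * m + 2 * m).factorial) := by
  have hasc : (T + 2) ^ m * (T * m + 1).ascFactorial m ≤
      (T + 1) ^ m * (T * m + m + 1).ascFactorial m := by
    simp only [Nat.ascFactorial_eq_prod_range, ← Finset.card_range m ▸ Finset.prod_const,
      ← Finset.prod_mul_distrib]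
    refine Finset.prod_le_prod' fun i hi => ?_
    nlinarith [Finset.mem_range.1 hi]
  have h₁ := Nat.factorial_mul_ascFactorial (T * m) m
  have h₂ := Nat.factorial_mul_ascFactorial (T * m + m) m
  rw [show T * m + 2 * m = T * m + m + m by ring, ← h₂, sq]
  nth_rw 2 [← h₁]
  calc _ = (T * m + m).factorial * (T * m).factorial *
        ((T + 2) ^ m * (T * m + 1).ascFactorial m) := by ring
    _ ≤ (T * m + m).factorial * (T * m).factorial *
        ((T + 1) ^ m * (T * m + m + 1).ascFactorial m) := by gcongr
    _ = _ := by ring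

namespace IsTNToeplitz

variable {f : ℝ → ℝ}

theorem comp_grid (hf : IsTNToeplitz f) (s : ℝ) {η : ℝ} (hη : 0 < η) :
    IsTNToeplitz fun k : ℤ => f (s + k * η) := by
  have h := IsTNKernel.comp_strictMono hf (φ := fun i : ℤ => s + i * η)
    (ψ := fun j : ℤ => (j : ℝ) * η) (fun i j hij => by dsimp only; gcongr)
    fun i j hij => by dsimp only; gcongr
  simpa only [IsTNToeplitz, Int.cast_sub, sub_mul, add_sub_assoc] using h

open Polynomial in
theorem newton_inequality (hf : IsTNToeplitz f) {x₀ x₁ s η : ℝ}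
    (hsupp : Function.support f ⊆ Icc x₀ x₁) (hs : s ≤ x₀) (hη : 0 < η) (k : ℕ) :
    (k.factorial * f (s + k * η)) * ((k + 2).factorial * f (s + (k + 2 : ℕ) * η)) ≤
      ((k + 1).factorial * f (s + (k + 1 : ℕ) * η)) ^ 2 := by
  obtain ⟨N, hN⟩ := exists_nat_gt ((x₁ - s) / η)
  rw [div_lt_iff₀ hη] at hN
  have hzero {x : ℝ} (hx : x ∉ Icc x₀ x₁) : f x = 0 :=
    Function.notMem_support.1 fun h => hx (hsupp h)
  set p : ℝ[X] := ∑ k ∈ Finset.range N, C (f (s + k * η)) * X ^ k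
  have hcoeff (k : ℕ) : p.coeff k = f (s + k * η) := by
    simp only [p, finsetSum_coeff, coeff_C_mul_X_pow, Finset.sum_ite_eq, Finset.mem_range]
    split_ifs with hk
    · rfl
    · have hNk : (N : ℝ) ≤ k := by exact_mod_cast not_lt.1 hk
      exact (hzero fun h => by nlinarith [h.2]).symm
  have hint : intCoeff p = fun k : ℤ => f (s + k * η) := by
    ext k
    rcases lt_or_ge k 0 with hk | hk
    · have hk' : (k : ℝ) < 0 := by exact_mod_cast hk
      rw [intCoeff_of_neg p hk, hzero fun h => by nlinarith [h.1]]
    · lift k to ℕ using hk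
      simp [intCoeff, hcoeff]
  have hsplits : p.Splits := IsTNToeplitz.splits (hint ▸ hf.comp_grid s hη)
  simpa only [hcoeff] using _root_.newton_inequality hsplits k

-- Newton's inequalities on a grid that starts `T` half-lengths to the left of `a`.
theorem pow_mul_mul_le_sq (hf : IsTNToeplitz f) {x₀ x₁ a b : ℝ}
    (hsupp : Function.support f ⊆ Icc x₀ x₁) (hab : a < b) (ha : f a ≠ 0) (hb : f b ≠ 0) {T : ℕ}
    (hT : a - T * ((b - a) / 2) ≤ x₀) {m : ℕ} (hm : 0 < m) :
    ((T + 2) / (T + 1) : ℝ) ^ m * (f a * f b) ≤ f ((a + b) / 2) ^ 2 := by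
  set η := (b - a) / 2 / m
  have hm' : (0 : ℝ) < m := Nat.cast_pos.2 hm
  have hηm : m * η = (b - a) / 2 := mul_div_cancel₀ _ hm'.ne'
  have hη₀ : 0 < η := by have := sub_pos.2 hab; positivity
  set s := a - T * ((b - a) / 2)
  have hgrid (i : ℕ) : s + (T * m + i : ℕ) * η = a + i * η := by
    push_cast
    linear_combination (T : ℝ) * hηm
  have hpos (i : ℕ) (hi : i ≤ 2 * m) : 0 < f (a + i * η) := by
    have hi' : (i : ℝ) ≤ 2 * m := by exact_mod_cast hi
    refine (hf.nonneg _).lt_of_ne' (hf.ordConnected_support.out ha hb ⟨?_, ?_⟩)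
    · exact le_add_of_nonneg_right (by positivity)
    · nlinarith
  have hlog := mul_le_sq_of_mul_le_sq (m := m)
    (B := fun i => (T * m + i).factorial * f (a + i * η))
    (fun i hi => mul_pos (Nat.cast_pos.2 (Nat.factorial_pos _)) (hpos i hi)) fun i _ => by
      simpa only [← hgrid, add_assoc] using hf.newton_inequality hsupp hT hη₀ (T * m + i)
  have hmid : a + m * η = (a + b) / 2 := by rw [hηm]; ring
  have hend : a + (2 * m : ℕ) * η = b := by push_cast; linear_combination 2 * hηm
  have hfact : ((T + 2) ^ m * (T * m + m).factorial ^ 2 : ℝ) ≤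
      (T + 1) ^ m * ((T * m).factorial * (T * m + 2 * m).factorial) := by
    exact_mod_cast add_two_pow_mul_factorial_sq_le T m
  simp only [hmid, hend, Nat.cast_zero, zero_mul, add_zero, mul_pow] at hlog
  have hfab : 0 ≤ f a * f b := mul_nonneg (hf.nonneg a) (hf.nonneg b)
  have hfac : (0 : ℝ) < (T * m + m).factorial ^ 2 := by positivity
  rw [div_pow, div_mul_eq_mul_div, div_le_iff₀ (by positivity)]
  refine le_of_mul_le_mul_right ?_ hfac
  nlinarith [mul_le_mul_of_nonneg_right hfact hfab,
    mul_le_mul_of_nonneg_left hlog (by positivity : (0 : ℝ) ≤ (T + 1) ^ m)]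

theorem subsingleton_support (hf : IsTNToeplitz f) {x₀ x₁ : ℝ}
    (hsupp : Function.support f ⊆ Icc x₀ x₁) : (Function.support f).Subsingleton := by
  by_contra hnontriv
  obtain ⟨a, ha, b, hb, hab⟩ := (not_subsingleton_iff.1 hnontriv).exists_lt
  have hδ : 0 < (b - a) / 2 := half_pos (sub_pos.2 hab)
  have hfab : 0 < f a * f b :=
    mul_pos ((hf.nonneg a).lt_of_ne' ha) ((hf.nonneg b).lt_of_ne' hb)
  obtain ⟨T, hT⟩ := exists_nat_gt ((a - x₀) / ((b - a) / 2))
  rw [div_lt_iff₀ hδ] at hT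
  have hratio : 1 < ((T + 2) / (T + 1) : ℝ) := by
    rw [one_lt_div (by positivity)]
    linarith
  obtain ⟨m, hm, hm₀⟩ := (((tendsto_pow_atTop_atTop_of_one_lt hratio).eventually_gt_atTop
    (f ((a + b) / 2) ^ 2 / (f a * f b))).and (Filter.eventually_gt_atTop 0)).exists
  rw [div_lt_iff₀ hfab] at hm
  exact (hf.pow_mul_mul_le_sq hsupp hab ha hb (by linarith) hm₀).not_gt hm

theorem isUpperSet_support (hf : IsTNToeplitz f) {x₀ : ℝ} (hx₀ : ∀ x < x₀, f x = 0)
    (hsupp : (Function.support f).Nontrivial) : IsUpperSet (Function.support f) := by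
  intro a b hab ha
  by_contra hb
  refine hsupp.not_subsingleton (hf.subsingleton_support (x₀ := x₀) (x₁ := b) fun x hx => ⟨?_, ?_⟩)
  · exact not_lt.1 fun h => hx (hx₀ x h)
  · exact le_of_not_ge fun h => hb (hf.ordConnected_support.out ha hx ⟨hab, h⟩)

theorem isUpperSet_or_isLowerSet_support (hf : IsTNToeplitz f) (hside : OneSided f)
    (hsupp : (Function.support f).Nontrivial) :
    IsUpperSet (Function.support f) ∨ IsLowerSet (Function.support f) := by
  obtain ⟨x₀, hx₀ | hx₀⟩ := hside
  · exact Or.inl (hf.isUpperSet_support hx₀ hsupp)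
  · obtain ⟨a, ha, b, hb, hab⟩ := hsupp
    have hupper := hf.comp_neg.isUpperSet_support (x₀ := -x₀)
      (fun x hx => hx₀ _ (lt_neg.1 hx))
      ⟨-a, by simpa using ha, -b, by simpa using hb, fun h => hab (neg_injective h)⟩
    exact Or.inr fun x y hyx hx => by
      simpa using hupper (neg_le_neg hyx) (by simpa using hx : -x ∈ _)

end IsTNToeplitz

/-! ### One-sided Pólya frequency functions -/

/-- A one-sided Pólya frequency function that is moreover Borel measurable, hence a test function
for all three kinds of preservers: `IsPolyaFrequencyFunction` alone gives measurability only up to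
a null set. -/
structure IsOneSidedPolya (Λ : ℝ → ℝ) : Prop where
  isTNFun : IsTNFun Λ
  integrable : Integrable Λ
  oneSided : OneSided Λ
  nontrivial_support : ∃ a b : ℝ, a ≠ b ∧ Λ a ≠ 0 ∧ Λ b ≠ 0

theorem IsOneSidedPolya.isPolyaFrequencyFunction {Λ : ℝ → ℝ} (hΛ : IsOneSidedPolya Λ) :
    IsPolyaFrequencyFunction Λ :=
  ⟨hΛ.integrable, IsTNToeplitz.nonneg hΛ.isTNFun.2, hΛ.nontrivial_support, hΛ.isTNFun.2⟩

theorem oneSided_indicator_Ioi (a : ℝ) (g : ℝ → ℝ) : OneSided ((Ioi a).indicator g) :=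
  ⟨a, Or.inl fun _ hx => indicator_of_notMem hx.not_gt _⟩

theorem isOneSidedPolya_indicator_Ioi {g : ℝ → ℝ} (hg : Continuous g)
    (htn : IsTNToeplitz ((Ioi 0).indicator g)) (hint : IntegrableOn g (Ioi 0))
    (hpos : ∀ u, 0 < u → 0 < g u) : IsOneSidedPolya ((Ioi 0).indicator g) where
  isTNFun := ⟨hg.measurable.indicator measurableSet_Ioi, htn⟩
  integrable := hint.integrable_indicator measurableSet_Ioi
  oneSided := oneSided_indicator_Ioi 0 g
  nontrivial_support := ⟨1, 2, by norm_num, by simpa using (hpos 1 one_pos).ne',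
    by simpa using (hpos 2 two_pos).ne'⟩

theorem IsTNToeplitz.exp_mul_indicator {s : Set ℝ} {g : ℝ → ℝ} (h : IsTNToeplitz (s.indicator g))
    (α : ℝ) : IsTNToeplitz (s.indicator fun u => Real.exp (α * u) * g u) := by
  have hpull : (s.indicator fun u => Real.exp (α * u) * g u) =
      fun u => Real.exp (α * u) * s.indicator g u := funext fun _ => indicator_mul_right s _ g
  exact hpull ▸ h.exp_mul α

theorem IsTNToeplitz.const_mul_indicator {s : Set ℝ} {g : ℝ → ℝ}
    (h : IsTNToeplitz (s.indicator g)) {c : ℝ} (hc : 0 ≤ c) :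
    IsTNToeplitz (s.indicator fun u => c * g u) := by
  have hpull : (s.indicator fun u => c * g u) = fun u => c * s.indicator g u :=
    funext fun _ => indicator_const_mul _ _ _ _
  exact hpull ▸ h.const_mul hc

theorem indicator_Ioi_sub_mul_indicator_Ioi_sub (g : ℝ → ℝ) (x y v : ℝ) :
    (Ioi 0).indicator g (x - v) * (Ioi 0).indicator (1 : ℝ → ℝ) (v - y) =
      (Ioo y x).indicator (fun v => g (x - v)) v := by
  by_cases hx : v < x <;> by_cases hy : y < v <;> simp [hx, hy]

-- The primitive is the convolution of the given function with the Heaviside function.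
theorem IsTNToeplitz.indicator_Ioi_primitive {g G : ℝ → ℝ}
    (h : IsTNToeplitz ((Ioi 0).indicator g)) (hg : Continuous g)
    (hG : ∀ x, HasDerivAt G (g x) x) (hG₀ : G 0 = 0) : IsTNToeplitz ((Ioi 0).indicator G) := by
  have hcont (x : ℝ) : Continuous fun v => g (x - v) := by fun_prop
  have hint (x y : ℝ) : Integrable ((Ioo y x).indicator fun v => g (x - v)) :=
    (((hcont x).continuousOn.integrableOn_Icc (a := y) (b := x)).mono_set
      Ioo_subset_Icc_self).integrable_indicator measurableSet_Ioo
  have hconv (x y : ℝ) :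
      ∫ v, (Ioo y x).indicator (fun v => g (x - v)) v = (Ioi 0).indicator G (x - y) := by
    rw [integral_indicator measurableSet_Ioo, ← integral_Ioc_eq_integral_Ioo]
    rcases lt_or_ge y x with hyx | hxy
    · rw [← intervalIntegral.integral_of_le hyx.le, intervalIntegral.integral_comp_sub_left g x,
        sub_self, intervalIntegral.integral_eq_sub_of_hasDerivAt (fun u _ => hG u)
          (hg.intervalIntegrable _ _), hG₀, sub_zero, indicator_of_mem (mem_Ioi.2 (sub_pos.2 hyx))]
    · rw [Ioc_eq_empty hxy.not_gt, setIntegral_empty,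
        indicator_of_notMem (notMem_Ioi.2 (sub_nonpos.2 hxy))]
  have hmul := IsTNKernel.integral_mul (μ := volume) h
    (indicator_isUpperSet (isUpperSet_Ioi (0 : ℝ)))
    fun x y => by simpa only [indicator_Ioi_sub_mul_indicator_Ioi_sub] using hint x y
  simpa only [IsTNToeplitz, indicator_Ioi_sub_mul_indicator_Ioi_sub, hconv] using hmul

theorem isTNFun_indicator_Ici_const_mul_exp_neg {t : ℝ} (ht : 0 ≤ t) :
    IsTNFun ((Ici 0).indicator fun u => t * Real.exp (-u)) := by
  refine ⟨Measurable.indicator (by fun_prop) measurableSet_Ici, ?_⟩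
  have h := ((IsTNToeplitz.indicator_isUpperSet (isUpperSet_Ici (0 : ℝ))).exp_mul_indicator
    (-1)).const_mul_indicator ht
  simpa [IsTNToeplitz] using h

theorem isOneSidedPolya_indicator_Ici_const_mul_exp_neg {t : ℝ} (ht : 0 < t) :
    IsOneSidedPolya ((Ici 0).indicator fun u => t * Real.exp (-u)) where
  isTNFun := isTNFun_indicator_Ici_const_mul_exp_neg ht.le
  integrable := by
    have h : IntegrableOn (fun u => t * Real.exp (-u)) (Ici 0) := by
      rw [integrableOn_Ici_iff_integrableOn_Ioi]
      exact (integrableOn_exp_neg_Ioi 0).const_mul t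
    exact h.integrable_indicator measurableSet_Ici
  oneSided := ⟨0, Or.inl fun _ hx => indicator_of_notMem hx.not_ge _⟩
  nontrivial_support := ⟨1, 2, by norm_num, by simp [ht.ne'], by simp [ht.ne']⟩

theorem isOneSidedPolya_indicator_Ioi_exp_mul_self {t α : ℝ} (ht : 0 < t) (hα : 0 < α) :
    IsOneSidedPolya ((Ioi 0).indicator fun u => t * (Real.exp (-α * u) * u)) := by
  have hid : IsTNToeplitz ((Ioi 0).indicator fun u : ℝ => u) :=
    (IsTNToeplitz.indicator_isUpperSet (isUpperSet_Ioi (0 : ℝ))).indicator_Ioi_primitive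
      continuous_const (fun x => hasDerivAt_id' x) rfl
  have hint := integrableOn_rpow_mul_exp_neg_mul_rpow (s := 1) (p := 1) (by norm_num) one_pos hα
  simp only [Real.rpow_one, mul_comm _ (Real.exp _)] at hint
  exact isOneSidedPolya_indicator_Ioi (by fun_prop)
    ((hid.exp_mul_indicator (-α)).const_mul_indicator ht.le) (hint.const_mul t)
    fun u hu => by positivity

section ExponentialPolynomials

open Polynomial

theorem isTNToeplitz_eval_exp_neg_of_derivative {P Q : ℝ[X]} {c : ℝ} {k : ℕ} (hc : 0 ≤ c)
    (hP : derivative P = -(C c * (X ^ k * Q))) (hP₁ : P.eval 1 = 0)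
    (hQ : IsTNToeplitz ((Ioi 0).indicator fun u => Q.eval (Real.exp (-u)))) :
    IsTNToeplitz ((Ioi 0).indicator fun u => P.eval (Real.exp (-u))) := by
  refine ((hQ.exp_mul_indicator (-(k + 1))).const_mul_indicator hc).indicator_Ioi_primitive
    (by fun_prop) (fun x => ?_) (by simp [hP₁])
  refine ((P.hasDerivAt _).comp x (hasDerivAt_neg x).exp).congr_deriv ?_
  have hexp : Real.exp (-(k + 1) * x) = Real.exp (-x) ^ (k + 1) := by
    rw [← Real.exp_nat_mul]
    push_cast
    ring_nf
  simp only [hP, hexp, eval_neg, eval_mul, eval_C, eval_pow, eval_X]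
  ring

theorem isTNToeplitz_one_sub_exp_neg :
    IsTNToeplitz ((Ioi 0).indicator fun u => (1 - X : ℝ[X]).eval (Real.exp (-u))) := by
  refine isTNToeplitz_eval_exp_neg_of_derivative (Q := 1) (c := 1) (k := 0) zero_le_one (by simp)
    (by simp) ?_
  simp only [eval_one]
  exact IsTNToeplitz.indicator_isUpperSet (isUpperSet_Ioi (0 : ℝ))

theorem isTNToeplitz_one_sub_three_mul_exp_neg_sq :
    IsTNToeplitz ((Ioi 0).indicator fun u =>
      (1 - 3 * X ^ 2 + 2 * X ^ 3 : ℝ[X]).eval (Real.exp (-u))) := by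
  refine isTNToeplitz_eval_exp_neg_of_derivative (c := 6) (k := 1) (by norm_num) ?_ (by norm_num)
    isTNToeplitz_one_sub_exp_neg
  simp only [derivative_add, derivative_sub, derivative_mul, derivative_one, derivative_ofNat,
    derivative_X_pow, map_ofNat, Nat.cast_ofNat]
  ring

theorem isOneSidedPolya_exp_neg_mul_eval {P : ℝ[X]} (hpos : ∀ w ∈ Ioo (0 : ℝ) 1, 0 < P.eval w)
    (hP : IsTNToeplitz ((Ioi 0).indicator fun u => P.eval (Real.exp (-u)))) :
    IsOneSidedPolya ((Ioi 0).indicator fun u => Real.exp (-u) * P.eval (Real.exp (-u))) := by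
  have htilt := hP.exp_mul_indicator (-1)
  simp only [neg_one_mul] at htilt
  obtain ⟨M, hM⟩ := isCompact_Icc.exists_bound_of_continuousOn
    (P.continuous.continuousOn (s := Icc (0 : ℝ) 1))
  refine isOneSidedPolya_indicator_Ioi (by fun_prop) htilt ?_ fun u hu =>
    mul_pos (Real.exp_pos _) (hpos _ ⟨Real.exp_pos _, Real.exp_lt_one_iff.2 (neg_lt_zero.2 hu)⟩)
  refine (integrableOn_exp_neg_Ioi 0).mul_bdd (c := M) (by fun_prop) ?_
  filter_upwards [ae_restrict_mem measurableSet_Ioi] with u hu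
  exact hM _ ⟨(Real.exp_pos _).le, (Real.exp_lt_one_iff.2 (neg_lt_zero.2 hu)).le⟩

end ExponentialPolynomials

-- The product of the two equations forces `q ^ 2 = 1 - r ^ 2`; the first then determines `α`.
theorem exists_exp_mul_one_sub_eq_exp_neg_mul_one_add {r : ℝ} (hr₀ : 0 < r) (hr₁ : r < 1) :
    ∃ q ∈ Ioo (0 : ℝ) 1, ∃ α, 0 < α ∧
      Real.exp (α * q) * (1 - q) = r ∧ Real.exp (-(α * q)) * (1 + q) = r := by
  have hr₂ : 0 < 1 - r ^ 2 := by nlinarith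
  set q := √(1 - r ^ 2)
  have hq : q ^ 2 = 1 - r ^ 2 := Real.sq_sqrt hr₂.le
  have hq₀ : 0 < q := Real.sqrt_pos.2 hr₂
  have hq₁ : 1 - q < r := by nlinarith
  have hq₂ : 0 < 1 - q := by nlinarith
  have hexp : Real.exp (Real.log (r / (1 - q)) / q * q) = r / (1 - q) := by
    rw [div_mul_cancel₀ _ hq₀.ne', Real.exp_log (by positivity)]
  refine ⟨q, ⟨hq₀, by linarith⟩, Real.log (r / (1 - q)) / q,
    div_pos (Real.log_pos ((one_lt_div hq₂).2 hq₁)) hq₀, ?_, ?_⟩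
  · rw [hexp, div_mul_cancel₀ _ hq₂.ne']
  · rw [Real.exp_neg, hexp, inv_div, div_mul_eq_mul_div, div_eq_iff hr₀.ne']
    linear_combination -hq

theorem exists_isOneSidedPolya_hump {p s : ℝ} (hp : 0 < p) (hps : p < s) :
    ∃ Λ : ℝ → ℝ, IsOneSidedPolya Λ ∧ Λ 0 = 0 ∧
      ∃ q ∈ Ioo (0 : ℝ) 1, Λ (1 - q) = p ∧ Λ 1 = s ∧ Λ (1 + q) = p := by
  have hs : 0 < s := hp.trans hps
  obtain ⟨q, hq, α, hα, hleft, hright⟩ :=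
    exists_exp_mul_one_sub_eq_exp_neg_mul_one_add (div_pos hp hs) ((div_lt_one hs).2 hps)
  have hval {v x : ℝ} (hv : -1 < v) (h : Real.exp (-(α * v)) * (1 + v) = x / s) :
      (Ioi 0).indicator (fun u => s * Real.exp α * (Real.exp (-α * u) * u)) (1 + v) = x := by
    rw [indicator_of_mem (mem_Ioi.2 (by linarith)), ← mul_div_cancel₀ x hs.ne', ← h,
      show -(α * v) = α + -α * (1 + v) by ring, Real.exp_add]
    ring
  refine ⟨_, isOneSidedPolya_indicator_Ioi_exp_mul_self (mul_pos hs (Real.exp_pos α)) hα,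
    by simp, q, hq, ?_, ?_, hval (by linarith [hq.1]) hright⟩
  · exact hval (v := -q) (by linarith [hq.2]) (by simpa [sub_eq_add_neg] using hleft)
  · simpa using hval (v := 0) (x := s) (by norm_num) (by simp [hs.ne'])

/-! ### Functions all of whose right truncations are TN -/

theorem continuous_of_antitone_of_add_le_add {L : ℝ → ℝ} (hanti : Antitone L)
    (hL : ∀ u q δ, 0 < q → 0 < δ → L u + L (u + q + δ) ≤ L (u + δ) + L (u + q)) :
    Continuous L := by
  have hdrop {x y c : ℝ} (hxy : x < y) (hc : 0 < c) :
      |L x - L y| ≤ |L (x + c) - L (y + c)| := by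
    rw [abs_of_nonneg (sub_nonneg.2 (hanti hxy.le)),
      abs_of_nonneg (sub_nonneg.2 (hanti (by linarith)))]
    have h := hL x (y - x) c (sub_pos.2 hxy) hc
    rw [add_sub_cancel] at h
    linarith
  refine continuous_iff_continuousAt.2 fun u => ?_
  obtain ⟨v, hv, huv⟩ := (hanti.countable_not_continuousAt.dense_compl ℝ).exists_gt u
  have hc : 0 < v - u := sub_pos.2 huv
  have hv' : Filter.Tendsto (fun x => L (x + (v - u))) (nhds u) (nhds (L v)) := by
    have hshift : Filter.Tendsto (fun x => x + (v - u)) (nhds u) (nhds v) := by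
      simpa using (continuous_add_const (v - u)).tendsto u
    exact (not_not.1 hv : ContinuousAt L v).tendsto.comp hshift
  refine tendsto_iff_dist_tendsto_zero.2
    (squeeze_zero (fun _ => dist_nonneg) (fun x => ?_) (tendsto_iff_dist_tendsto_zero.1 hv'))
  rw [Real.dist_eq, Real.dist_eq]
  rcases lt_trichotomy x u with hx | rfl | hx
  · simpa using hdrop hx hc
  · simp
  · simpa [abs_sub_comm] using hdrop hx hc

theorem exists_eq_add_mul_of_midpoint {L : ℝ → ℝ} (hL : Continuous L)
    (hmid : ∀ u δ, 0 < δ → L u + L (u + δ + δ) = L (u + δ) + L (u + δ)) :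
    ∃ a b, ∀ x, L x = a + b * x := by
  have hmid' (x y : ℝ) : L (midpoint ℝ x y) = midpoint ℝ (L x) (L y) := by
    wlog hxy : x < y generalizing x y
    · rcases (not_lt.1 hxy).eq_or_lt with rfl | hyx
      · simp
      · rw [midpoint_comm, midpoint_comm (L x), this y x hyx]
    have h := hmid x ((y - x) / 2) (by linarith)
    rw [show x + (y - x) / 2 = midpoint ℝ x y by simp [midpoint_eq_smul_add]; ring,
      show midpoint ℝ x y + (y - x) / 2 = y by simp [midpoint_eq_smul_add]; ring] at h
    rw [midpoint_eq_smul_add ℝ (L x), h]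
    simp [← two_mul]
  let A := AffineMap.ofMapMidpoint L hmid' hL
  refine ⟨L 0, A.linear 1, fun x => ?_⟩
  have h : L (x + 0) = A.linear x + L 0 := A.map_vadd 0 x
  rw [← mul_one x, ← smul_eq_mul, map_smul] at h
  simpa [add_comm, mul_comm] using h

section Truncations

variable {H : ℝ → ℝ} (hH : ∀ s, IsTNToeplitz ((Ici 0).indicator fun u => H (s + u)))

include hH

theorem mul_le_mul_of_truncations (u : ℝ) {q δ : ℝ} (hq : 0 < q) (hδ : 0 < δ) :
    H u * H (u + q + δ) ≤ H (u + δ) * H (u + q) := by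
  have h := (hH u).mul_le_mul hδ (lt_add_of_pos_left δ hq) (by ring : 0 + (q + δ) = δ + q)
  simpa [hq.le, hδ.le, (add_pos hq hδ).le, add_assoc] using h

theorem det_truncations_nonneg (u : ℝ) {q ε δ : ℝ} (hq : 0 < q) (hε : 0 < ε) (hεδ : ε < δ) :
    H u * (H (u + δ) * H (u + q) - H u * H (u + q + δ)) ≤
      H (u + (δ - ε)) * (H (u + ε) * H (u + q) - H u * H (u + q + ε)) := by
  have hdet := hH u 3 ![-ε, 0, q] ![-δ, -ε, 0]
    (by simp [Fin.strictMono_iff_lt_succ, Fin.forall_fin_two, hε, hq])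
    (by simp [Fin.strictMono_iff_lt_succ, Fin.forall_fin_two, hε, hεδ])
  have hδ := hε.trans hεδ
  simp only [Matrix.det_fin_three, Fin.isValue, Matrix.of_apply, Matrix.cons_val_zero, mem_Ici,
    sub_neg_eq_add, sub_nonneg, add_zero, zero_add, sub_zero, sub_self, zero_mul,
    Matrix.cons_val_one, Matrix.cons_val, indicator_of_mem, not_false_eq_true, indicator_of_notMem,
    Left.nonneg_neg_iff, hεδ.le, hε.le, hq.le, hδ.le, (add_pos hq hε).le, (add_pos hq hδ).le,
    hε.not_ge, Std.le_refl, neg_add_eq_sub] at hdet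
  rw [add_assoc u q, add_assoc u q]
  linarith

-- Let `ε → 0` in `det_truncations_nonneg`: the right-hand side vanishes.
theorem mul_le_mul_of_truncations_of_continuous (hpos : ∀ x, 0 < H x) (hcont : Continuous H)
    (u : ℝ) {q δ : ℝ} (hq : 0 < q) (hδ : 0 < δ) :
    H (u + δ) * H (u + q) ≤ H u * H (u + q + δ) := by
  have hlim : Filter.Tendsto
      (fun ε => H (u + (δ - ε)) * (H (u + ε) * H (u + q) - H u * H (u + q + ε)))
      (nhdsWithin 0 (Ioi 0)) (nhds 0) := by
    refine Filter.Tendsto.mono_left (Continuous.tendsto' (by fun_prop) _ _ ?_) nhdsWithin_le_nhds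
    simp
  have hle : H u * (H (u + δ) * H (u + q) - H u * H (u + q + δ)) ≤ 0 := by
    refine ge_of_tendsto hlim ?_
    filter_upwards [Ioo_mem_nhdsGT hδ] with ε hε
    exact det_truncations_nonneg hH u hq hε.1 hε.2
  exact sub_nonpos.1 (nonpos_of_mul_nonpos_right hle (hpos u))

theorem exists_eq_const_mul_exp_of_truncations (hpos : ∀ x, 0 < H x) (hanti : Antitone H) :
    ∃ c β : ℝ, 0 < c ∧ 0 ≤ β ∧ ∀ x, H x = c * Real.exp (-(β * x)) := by
  set L := fun x => Real.log (H x)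
  have hL (x y : ℝ) : Real.log (H x * H y) = L x + L y :=
    Real.log_mul (hpos x).ne' (hpos y).ne'
  have hHL : H = fun x => Real.exp (L x) := funext fun x => (Real.exp_log (hpos x)).symm
  have hLanti : Antitone L := fun x y hxy => Real.log_le_log (hpos y) (hanti hxy)
  have hLcont : Continuous L := by
    refine continuous_of_antitone_of_add_le_add hLanti fun u q δ hq hδ => ?_
    rw [← hL, ← hL]
    exact Real.log_le_log (mul_pos (hpos _) (hpos _)) (mul_le_mul_of_truncations hH u hq hδ)
  have hHcont : Continuous H := hHL ▸ Real.continuous_exp.comp hLcont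
  obtain ⟨a, b, hab⟩ := exists_eq_add_mul_of_midpoint hLcont fun u δ hδ => by
    rw [← hL, ← hL]
    exact congrArg Real.log ((mul_le_mul_of_truncations hH u hδ hδ).antisymm
      (mul_le_mul_of_truncations_of_continuous hH hpos hHcont u hδ hδ))
  refine ⟨Real.exp a, -b, Real.exp_pos a, ?_, fun x => ?_⟩
  · have h := hLanti (zero_le_one' ℝ)
    rw [hab, hab] at h
    linarith
  · rw [hHL, ← Real.exp_add]
    dsimp only
    rw [hab, neg_mul, neg_neg]

end Truncations

/-! ### Preservers are power functions -/

/-- Functions whose composition with any Borel one-sided Pólya frequency function is a one-sided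
function with totally non-negative Toeplitz kernel: the common consequence of the three notions of
preserver. -/
def PreservesOneSidedTN (F : ℝ → ℝ) : Prop :=
  ∀ Λ : ℝ → ℝ, IsOneSidedPolya Λ → IsTNToeplitz (F ∘ Λ) ∧ OneSided (F ∘ Λ)

namespace PreservesOneSidedTN

variable {F : ℝ → ℝ} (hF : PreservesOneSidedTN F)

include hF

theorem nonneg {x : ℝ} (hx : 0 < x) : 0 ≤ F x := by
  have h := (hF _ (isOneSidedPolya_indicator_Ici_const_mul_exp_neg hx)).1.nonneg 0
  simpa using h

theorem monotoneOn : MonotoneOn F (Ioi 0) := by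
  intro p hp s hs hps
  rcases hps.eq_or_lt with rfl | hps
  · rfl
  obtain ⟨Λ, hΛ, -, q, hq, hleft, hmid, hright⟩ := exists_isOneSidedPolya_hump hp hps
  have h := (hF Λ hΛ).1.mul_le_mul (a := 1 - q) (b := 1) (c := 1) (d := 1 + q)
    (by linarith [hq.1]) (by linarith [hq.1]) (by ring)
  simp only [Function.comp_apply, hleft, hmid, hright] at h
  exact abs_le_of_sq_le_sq' (by rwa [sq, sq]) (hF.nonneg hs) |>.2

variable {t : ℝ} (ht : 0 < t) (hFt : F t ≠ 0)

include ht hFt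

theorem ne_zero_of_le {s : ℝ} (hts : t ≤ s) : F s ≠ 0 := fun hs =>
  hFt ((hs ▸ hF.monotoneOn ht (ht.trans_le hts) hts).antisymm (hF.nonneg ht))

theorem apply_zero : F 0 = 0 := by
  by_contra h₀
  have htest := isOneSidedPolya_indicator_Ici_const_mul_exp_neg ht
  obtain ⟨x₀, hx₀ | hx₀⟩ := (hF _ htest).2
  · have hx := hx₀ (min x₀ 0 - 1) (by linarith [min_le_left x₀ 0])
    rw [Function.comp_apply, indicator_of_notMem (by simp)] at hx
    · exact h₀ hx
  · have hpos : 0 < max x₀ 0 + 1 := by positivity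
    obtain ⟨Λ, hΛ, hzero, q, hq, hleft, hmid, -⟩ := exists_isOneSidedPolya_hump
      (p := t * Real.exp (-(max x₀ 0 + 1))) (s := t) (by positivity)
      (mul_lt_of_lt_one_right ht (Real.exp_lt_one_iff.2 (neg_lt_zero.2 hpos)))
    have hx := hx₀ (max x₀ 0 + 1) (by linarith [le_max_left x₀ 0])
    rw [Function.comp_apply, indicator_of_mem (mem_Ici.2 hpos.le), ← hleft] at hx
    exact (hF Λ hΛ).1.ordConnected_support.out (x := 0) (y := 1) (by simpa [hzero] using h₀)
      (by simpa [hmid] using hFt) ⟨by linarith [hq.2], by linarith [hq.1]⟩ hx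

theorem ne_zero {r : ℝ} (hr : 0 < r) : F r ≠ 0 := by
  rcases le_or_gt t r with htr | hrt
  · exact hF.ne_zero_of_le ht hFt htr
  have h₀ := hF.apply_zero ht hFt
  have htest := hF _ (isOneSidedPolya_indicator_Ici_const_mul_exp_neg
    (mul_pos ht (Real.exp_pos 1)))
  set f := (Ici 0).indicator fun u => t * Real.exp 1 * Real.exp (-u)
  have hzero (x : ℝ) (hx : x < 0) : (F ∘ f) x = 0 := by simp [f, hx.not_ge, h₀]
  have hval {x : ℝ} (hx : 0 ≤ x) : f (1 + x) = t * Real.exp (-x) := by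
    have hmem : 1 + x ∈ Ici (0 : ℝ) := mem_Ici.2 (by positivity)
    simp only [f, indicator_of_mem hmem, mul_assoc, ← Real.exp_add, neg_add, add_neg_cancel_left]
  have hlog : 0 ≤ Real.log (t / r) := Real.log_nonneg ((one_le_div hr).2 hrt.le)
  have hone : (F ∘ f) 1 ≠ 0 := by
    simpa [show f 1 = t by simpa using hval le_rfl] using hFt
  have hzero' : (F ∘ f) 0 ≠ 0 := by
    simpa [f] using hF.ne_zero_of_le ht hFt
      (le_mul_of_one_le_right ht.le (Real.one_le_exp zero_le_one))
  have hupper := htest.1.isUpperSet_support hzero ⟨0, hzero', 1, hone, zero_ne_one⟩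
  have hmem : (F ∘ f) (1 + Real.log (t / r)) ≠ 0 := hupper (le_add_of_nonneg_right hlog) hone
  rwa [Function.comp_apply, hval hlog, Real.exp_neg, Real.exp_log (by positivity), inv_div,
    mul_div_cancel₀ _ ht.ne'] at hmem

theorem exists_eq_const_mul_rpow :
    ∃ c β : ℝ, 0 < c ∧ 0 ≤ β ∧ ∀ x, 0 < x → F x = c * x ^ β := by
  have hpos (x : ℝ) : 0 < F (Real.exp (-x)) :=
    (hF.nonneg (Real.exp_pos _)).lt_of_ne' (hF.ne_zero ht hFt (Real.exp_pos _))
  have hanti : Antitone fun x => F (Real.exp (-x)) := fun x y hxy =>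
    hF.monotoneOn (Real.exp_pos _) (Real.exp_pos _) (Real.exp_le_exp.2 (neg_le_neg hxy))
  obtain ⟨c, β, hc, hβ, h⟩ := exists_eq_const_mul_exp_of_truncations (fun s => by
    have htest := (hF _ (isOneSidedPolya_indicator_Ici_const_mul_exp_neg (Real.exp_pos (-s)))).1
    convert htest using 1
    ext u
    by_cases hu : 0 ≤ u <;> simp [hu, hF.apply_zero ht hFt, ← Real.exp_add, add_comm]) hpos hanti
  refine ⟨c, β, hc, hβ, fun x hx => ?_⟩
  have hx' := h (-Real.log x)
  rwa [neg_neg, Real.exp_log hx, mul_neg, neg_neg, mul_comm β, ← Real.rpow_def_of_pos hx] at hx'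

end PreservesOneSidedTN

/-! ### Hankel determinants of a function with a power expansion at zero -/

section Hankel

open Asymptotics Filter Topology Matrix

variable {n N : ℕ} {e : Fin n → ℕ} {C : Fin n → ℝ} {Φ : ℝ → ℝ}

theorem isLittleO_comp_mul_const {R : ℝ → ℝ} (hR : R =o[𝓝[>] 0] fun z => z ^ N) {a : ℝ}
    (ha : 0 < a) : (fun z => R (z * a)) =o[𝓝[>] 0] fun z => z ^ N := by
  have hlim : Tendsto (fun z => z * a) (𝓝[>] 0) (𝓝[>] 0) := by
    refine tendsto_nhdsWithin_iff.2 ⟨?_, ?_⟩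
    · have hcont : Continuous fun z : ℝ => z * a := by fun_prop
      exact (hcont.tendsto' _ _ (zero_mul a)).mono_left nhdsWithin_le_nhds
    · filter_upwards [self_mem_nhdsWithin] with z hz
      exact mul_pos hz ha
  refine (hR.comp_tendsto hlim).trans_isBigO ?_
  simp only [Function.comp_def, mul_pow, mul_comm _ (a ^ N)]
  exact isBigO_const_mul_self _ _ _

theorem isLittleO_mul_matrix_mul {ι α : Type*} [Fintype ι] {l : Filter α} {g : α → ℝ}
    {S : α → Matrix ι ι ℝ} (hS : ∀ i j, (fun z => S z i j) =o[l] g) (P Q : Matrix ι ι ℝ) (i j : ι) :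
    (fun z => (P * S z * Q) i j) =o[l] g := by
  simp only [Matrix.mul_apply, Finset.sum_mul]
  refine IsLittleO.fun_sum fun k _ => IsLittleO.fun_sum fun m _ => ?_
  exact ((hS m k).const_mul_left (P i m * Q k j)).congr_left fun z => mul_right_comm _ _ _

theorem hankel_eq_transpose_vandermonde_mul (q z : ℝ) :
    (of fun i j : Fin n => ∑ l, C l * (z * q ^ (i + j : ℕ)) ^ e l) =
      (vandermonde fun l => q ^ e l)ᵀ * diagonal (fun l => C l * z ^ e l) *
        vandermonde fun l => q ^ e l := by
  ext i j
  rw [Matrix.mul_apply]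
  simp only [of_apply, mul_diagonal, transpose_apply, vandermonde_apply]
  exact Finset.sum_congr rfl fun l _ => by ring

theorem det_transpose_mul_diagonal_mul_add {ι : Type*} [Fintype ι] [DecidableEq ι]
    {V : Matrix ι ι ℝ} (hV : IsUnit V.det) (S : Matrix ι ι ℝ) {w : ι → ℝ} (hw : ∀ l, w l ≠ 0)
    (c : ι → ℝ) :
    (Vᵀ * diagonal (fun l => c l * w l) * V + S).det = (∏ l, w l) *
      (Vᵀ * (diagonal c + of fun l k => (Vᵀ⁻¹ * S * V⁻¹) l k / w l) * V).det := by
  have hVT : IsUnit Vᵀ.det := by rwa [det_transpose]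
  have hscale : (diagonal w * of fun l k => (Vᵀ⁻¹ * S * V⁻¹) l k / w l) = Vᵀ⁻¹ * S * V⁻¹ := by
    ext l k
    simp only [diagonal_mul, of_apply, mul_div_cancel₀ _ (hw l)]
  have hfactor : Vᵀ * diagonal (fun l => c l * w l) * V + S =
      Vᵀ * (diagonal w * (diagonal c + of fun l k => (Vᵀ⁻¹ * S * V⁻¹) l k / w l)) * V := by
    rw [mul_add, hscale, diagonal_mul_diagonal, mul_add, add_mul, mul_assoc Vᵀ⁻¹,
      mul_nonsing_inv_cancel_left _ _ hVT, nonsing_inv_mul_cancel_right _ _ hV]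
    simp only [mul_comm (w _)]
  rw [hfactor]
  simp only [det_mul, det_diagonal]
  ring

theorem tendsto_det_hankel_div_pow (he : Function.Injective e) (heN : ∀ l, e l ≤ N)
    (hΦ : (fun z => Φ z - ∑ l, C l * z ^ e l) =o[𝓝[>] 0] fun z => z ^ N) {q : ℝ} (hq₀ : 0 < q)
    (hq₁ : q < 1) :
    Tendsto (fun z => (of fun i j : Fin n => Φ (z * q ^ (i + j : ℕ))).det / z ^ ∑ l, e l) (𝓝[>] 0)
      (𝓝 ((vandermonde fun l => q ^ e l).det ^ 2 * ∏ l, C l)) := by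
  set V := vandermonde fun l => q ^ e l
  have hV : IsUnit V.det := (det_vandermonde_ne_zero_iff.2
    ((pow_right_strictAnti₀ hq₀ hq₁).injective.comp he)).isUnit
  set S : ℝ → Matrix (Fin n) (Fin n) ℝ := fun z => of fun i j =>
    Φ (z * q ^ (i + j : ℕ)) - ∑ l, C l * (z * q ^ (i + j : ℕ)) ^ e l
  have hS (i j : Fin n) : (fun z => S z i j) =o[𝓝[>] 0] fun z => z ^ N :=
    isLittleO_comp_mul_const hΦ (pow_pos hq₀ _)
  set T : ℝ → Matrix (Fin n) (Fin n) ℝ := fun z => of fun l k => (Vᵀ⁻¹ * S z * V⁻¹) l k / z ^ e l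
  have hT : Tendsto T (𝓝[>] 0) (𝓝 0) := by
    refine tendsto_pi_nhds.2 fun l => ?_
    refine tendsto_pi_nhds.2 fun k => ?_
    refine ((isLittleO_mul_matrix_mul hS _ _ l k).trans_isBigO ?_).tendsto_div_nhds_zero
    refine IsBigO.of_norm_eventuallyLE ?_
    filter_upwards [Ioo_mem_nhdsGT one_pos] with z hz
    rw [Real.norm_of_nonneg (pow_pos hz.1 _).le]
    exact pow_le_pow_of_le_one hz.1.le hz.2.le (heN l)
  have hdet : Tendsto (fun z => (Vᵀ * (diagonal C + T z) * V).det) (𝓝[>] 0)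
      (𝓝 (V.det ^ 2 * ∏ l, C l)) := by
    have hcont : Continuous fun A : Matrix (Fin n) (Fin n) ℝ =>
        (Vᵀ * (diagonal C + A) * V).det := by fun_prop
    refine (hcont.tendsto' (0 : Matrix (Fin n) (Fin n) ℝ) _ ?_).comp hT
    simp only [add_zero, det_mul, det_transpose, det_diagonal]
    ring
  refine hdet.congr' ?_
  filter_upwards [self_mem_nhdsWithin] with z hz
  have hsplit : (of fun i j : Fin n => Φ (z * q ^ (i + j : ℕ))) =
      Vᵀ * diagonal (fun l => C l * z ^ e l) * V + S z := by
    rw [← hankel_eq_transpose_vandermonde_mul]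
    ext i j
    simp [S]
  rw [hsplit, det_transpose_mul_diagonal_mul_add hV _ fun l => (pow_pos hz _).ne',
    Finset.prod_pow_eq_pow_sum, mul_div_cancel_left₀ _ (pow_pos hz _).ne']

theorem IsTNToeplitz.sign_revPerm_mul_det_hankel_nonneg
    (htn : IsTNToeplitz ((Ioi 0).indicator fun u => Φ (Real.exp (-u)))) {z : ℝ}
    (hz : z ∈ Ioo (0 : ℝ) 1) :
    0 ≤ (Equiv.Perm.sign (Fin.revPerm : Equiv.Perm (Fin n)) : ℝ) *
      (of fun i j : Fin n => Φ (z * Real.exp (-1) ^ (i + j : ℕ))).det := by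
  have hmatrix : (of fun i j : Fin n => Φ (z * Real.exp (-1) ^ (i + j : ℕ))).submatrix id
      Fin.revPerm = of fun i j : Fin n => (Ioi 0).indicator (fun u => Φ (Real.exp (-u)))
        (-Real.log z + i - -((j.rev : ℕ) : ℝ)) := by
    ext i j
    have hpos : 0 < -Real.log z + i - -((j.rev : ℕ) : ℝ) := by
      have hlog := neg_pos.2 (Real.log_neg hz.1 hz.2)
      rw [sub_neg_eq_add]
      positivity
    have hexp : Real.exp (-(-Real.log z + i - -((j.rev : ℕ) : ℝ))) =
        z * Real.exp (-1) ^ (i + j.rev : ℕ) := by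
      rw [← Real.exp_nat_mul, ← Real.exp_log hz.1, ← Real.exp_add, Real.log_exp]
      push_cast
      ring_nf
    simp only [submatrix_apply, of_apply, id, Fin.revPerm_apply, indicator_of_mem (mem_Ioi.2 hpos),
      hexp]
  rw [← det_permute', hmatrix]
  exact htn n (fun i => -Real.log z + i) (fun j => -((j.rev : ℕ) : ℝ))
    (fun i j hij => by simpa using hij) (fun i j hij => by simpa using hij)

theorem IsTNToeplitz.sign_revPerm_mul_prod_nonneg (he : Function.Injective e)
    (heN : ∀ l, e l ≤ N) (hΦ : (fun z => Φ z - ∑ l, C l * z ^ e l) =o[𝓝[>] 0] fun z => z ^ N)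
    (htn : IsTNToeplitz ((Ioi 0).indicator fun u => Φ (Real.exp (-u)))) :
    0 ≤ (Equiv.Perm.sign (Fin.revPerm : Equiv.Perm (Fin n)) : ℝ) * ∏ l, C l := by
  have hq : Real.exp (-1) < 1 := Real.exp_lt_one_iff.2 (by norm_num)
  have hlim := (tendsto_det_hankel_div_pow he heN hΦ (Real.exp_pos _) hq).const_mul
    (Equiv.Perm.sign (Fin.revPerm : Equiv.Perm (Fin n)) : ℝ)
  have hV : (vandermonde fun l => Real.exp (-1) ^ e l).det ≠ 0 := det_vandermonde_ne_zero_iff.2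
    ((pow_right_strictAnti₀ (Real.exp_pos _) hq).injective.comp he)
  refine nonneg_of_mul_nonneg_right ?_ (sq_pos_of_ne_zero hV)
  rw [mul_left_comm]
  refine ge_of_tendsto hlim ?_
  filter_upwards [Ioo_mem_nhdsGT one_pos] with z hz
  rw [← mul_div_assoc]
  exact div_nonneg (htn.sign_revPerm_mul_det_hankel_nonneg hz) (pow_pos hz.1 _).le

end Hankel

/-! ### The exponent is `0` or `1` -/

section Exponent

open Asymptotics Filter Topology Polynomial

theorem isLittleO_one_sub_rpow_sub (β : ℝ) :
    (fun v => (1 - v) ^ β - (1 - β * v + β * (β - 1) / 2 * v ^ 2)) =o[𝓝 0] fun v => v ^ 2 := by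
  have hneg : Tendsto (fun v : ℝ => -v) (𝓝 0) (𝓝 0) :=
    Continuous.tendsto' (by fun_prop) _ _ neg_zero
  have hO := ((Real.one_add_rpow_hasFPowerSeriesAt_zero (a := β)).isBigO_sub_partialSum_pow
    3).comp_tendsto hneg
  have hcoeff : Ring.choose β 2 = β * (β - 1) / 2 := by
    rw [div_eq_inv_mul]
    simp [Ring.choose_eq_smul, descPochhammer_succ_right, smeval_mul, smeval_sub]
  have hpow : (fun v : ℝ => ‖-v‖ ^ 3) =o[𝓝 0] fun v => v ^ 2 := by
    simp only [norm_neg, ← norm_pow]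
    exact (isLittleO_pow_pow (by norm_num : 2 < 3)).norm_left
  refine (hO.trans_isLittleO hpow).congr_left fun v => ?_
  simp only [zero_add, FormalMultilinearSeries.partialSum, binomialSeries,
    FormalMultilinearSeries.apply_eq_prod_smul_coeff, Finset.prod_const, Finset.card_univ,
    Fintype.card_fin, FormalMultilinearSeries.coeff_ofScalars, smul_eq_mul, Finset.sum_range_succ,
    Finset.range_one, Finset.sum_singleton, pow_zero, Ring.choose_zero_right', mul_one,
    Ring.choose_one_right', hcoeff, Function.comp_apply, ← sub_eq_add_neg]
  ring

theorem isLittleO_eval_one_sub_X_rpow_sub (β : ℝ) :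
    (fun z => (1 - X : ℝ[X]).eval z ^ β -
      ∑ l, (![1, -β, β * (β - 1) / 2] : Fin 3 → ℝ) l * z ^ (![0, 1, 2] : Fin 3 → ℕ) l)
      =o[𝓝[>] 0] fun z => z ^ 2 := by
  refine ((isLittleO_one_sub_rpow_sub β).mono nhdsWithin_le_nhds).congr_left fun z => ?_
  simp only [eval_sub, eval_one, eval_X, Fin.sum_univ_three, Matrix.cons_val]
  ring

theorem isLittleO_eval_cubic_rpow_sub (β : ℝ) :
    (fun z => (1 - 3 * X ^ 2 + 2 * X ^ 3 : ℝ[X]).eval z ^ β -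
      ∑ l, (![1, -(3 * β), 2 * β, 9 * (β * (β - 1)) / 2] : Fin 4 → ℝ) l *
        z ^ (![0, 2, 3, 4] : Fin 4 → ℕ) l) =o[𝓝[>] 0] fun z => z ^ 4 := by
  have hv : Tendsto (fun z : ℝ => z ^ 2 * (3 - 2 * z)) (𝓝 0) (𝓝 0) :=
    Continuous.tendsto' (by fun_prop) _ _ (by simp)
  have hfactor : (fun z : ℝ => (3 - 2 * z) ^ 2) =O[𝓝 0] fun _ => (1 : ℝ) :=
    (Continuous.tendsto (by fun_prop) _).isBigO_one ℝ
  have hmain : (fun z : ℝ => (1 - z ^ 2 * (3 - 2 * z)) ^ β - (1 - β * (z ^ 2 * (3 - 2 * z)) +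
      β * (β - 1) / 2 * (z ^ 2 * (3 - 2 * z)) ^ 2)) =o[𝓝 0] fun z => z ^ 4 := by
    refine ((isLittleO_one_sub_rpow_sub β).comp_tendsto hv).trans_isBigO ?_
    refine ((isBigO_refl (fun z : ℝ => z ^ 4) _).mul hfactor).congr (fun z => ?_) fun z => ?_
    · simp only [Function.comp_apply]
      ring
    · ring
  have hrest : (fun z : ℝ => z ^ 4 * (β * (β - 1) * (2 * z ^ 2 - 6 * z))) =o[𝓝 0]
      fun z => z ^ 4 := by
    have hlim : Tendsto (fun z : ℝ => β * (β - 1) * (2 * z ^ 2 - 6 * z)) (𝓝 0) (𝓝 0) :=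
      Continuous.tendsto' (by fun_prop) _ _ (by simp)
    simpa using (isBigO_refl (fun z : ℝ => z ^ 4) _).mul_isLittleO ((isLittleO_one_iff ℝ).2 hlim)
  refine ((hmain.add hrest).mono nhdsWithin_le_nhds).congr_left fun z => ?_
  simp only [eval_add, eval_sub, eval_one, eval_mul, eval_ofNat, eval_pow, eval_X,
    Fin.sum_univ_four, Matrix.cons_val]
  ring_nf

namespace PreservesOneSidedTN

variable {F : ℝ → ℝ} (hF : PreservesOneSidedTN F) {c β : ℝ}

include hF

theorem isTNToeplitz_eval_rpow (hc : 0 < c) (h₀ : F 0 = 0) (hpow : ∀ x, 0 < x → F x = c * x ^ β)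
    {P : ℝ[X]} (hpos : ∀ w ∈ Ioo (0 : ℝ) 1, 0 < P.eval w)
    (hP : IsTNToeplitz ((Ioi 0).indicator fun u => P.eval (Real.exp (-u)))) :
    IsTNToeplitz ((Ioi 0).indicator fun u => P.eval (Real.exp (-u)) ^ β) := by
  have htest := (hF _ (isOneSidedPolya_exp_neg_mul_eval hpos hP)).1
  rw [← indicator_comp_of_zero h₀] at htest
  convert (htest.exp_mul_indicator β).const_mul_indicator (inv_nonneg.2 hc.le) using 1
  refine indicator_congr fun u hu => ?_
  have hPu : 0 < P.eval (Real.exp (-u)) :=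
    hpos _ ⟨Real.exp_pos _, Real.exp_lt_one_iff.2 (neg_lt_zero.2 hu)⟩
  rw [Function.comp_apply, hpow _ (mul_pos (Real.exp_pos _) hPu),
    Real.mul_rpow (Real.exp_pos _).le hPu.le, ← Real.exp_mul]
  have hcancel : Real.exp (β * u) * Real.exp (-u * β) = 1 := by
    rw [← Real.exp_add, Real.exp_eq_one_iff]
    ring
  linear_combination -(P.eval (Real.exp (-u)) ^ β * c⁻¹ * c) * hcancel -
    P.eval (Real.exp (-u)) ^ β * inv_mul_cancel₀ hc.ne'

-- The test function built from `1 - w` excludes `0 < β < 1`, the one built from the cubic `1 < β`.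
theorem exponent_eq_zero_or_one (hc : 0 < c) (h₀ : F 0 = 0) (hβ : 0 ≤ β)
    (hpow : ∀ x, 0 < x → F x = c * x ^ β) : β = 0 ∨ β = 1 := by
  have hcubic (w : ℝ) (hw : w ∈ Ioo (0 : ℝ) 1) : 0 < (1 - 3 * X ^ 2 + 2 * X ^ 3 : ℝ[X]).eval w := by
    have hfactor : (1 - 3 * X ^ 2 + 2 * X ^ 3 : ℝ[X]).eval w = (1 - w) ^ 2 * (1 + 2 * w) := by
      simp only [eval_add, eval_sub, eval_one, eval_mul, eval_ofNat, eval_pow, eval_X]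
      ring
    rw [hfactor]
    exact mul_pos (pow_pos (sub_pos.2 hw.2) 2) (by linarith [hw.1])
  have hge : 0 ≤ β * β * (β - 1) := by
    have h := (hF.isTNToeplitz_eval_rpow hc h₀ hpow (fun w hw => by simpa using hw.2)
      isTNToeplitz_one_sub_exp_neg).sign_revPerm_mul_prod_nonneg (by decide) (by decide)
      (isLittleO_eval_one_sub_X_rpow_sub β)
    rw [show Equiv.Perm.sign (Fin.revPerm : Equiv.Perm (Fin 3)) = -1 by decide] at h
    simp only [Units.val_neg, Units.val_one, Int.cast_neg, Int.cast_one, Fin.prod_univ_three,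
      Matrix.cons_val] at h
    linarith
  have hle : β * β * (β * (β - 1)) ≤ 0 := by
    have h := (hF.isTNToeplitz_eval_rpow hc h₀ hpow hcubic
      isTNToeplitz_one_sub_three_mul_exp_neg_sq).sign_revPerm_mul_prod_nonneg (by decide)
      (by decide) (isLittleO_eval_cubic_rpow_sub β)
    rw [show Equiv.Perm.sign (Fin.revPerm : Equiv.Perm (Fin 4)) = 1 by decide] at h
    simp only [Units.val_one, Int.cast_one, Fin.prod_univ_four, Matrix.cons_val] at h
    linarith
  have hprod : β * β * (β * (β - 1)) = 0 :=
    hle.antisymm (by simpa only [mul_left_comm] using mul_nonneg hβ hge)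
  simpa [sub_eq_zero] using hprod

end PreservesOneSidedTN

end Exponent

/-! ### The three classifications -/

theorem nontrivial_support_iff {f : ℝ → ℝ} :
    (Function.support f).Nontrivial ↔ ∃ a b : ℝ, a ≠ b ∧ f a ≠ 0 ∧ f b ≠ 0 :=
  ⟨fun ⟨a, ha, b, hb, hab⟩ => ⟨a, b, hab, ha, hb⟩, fun ⟨a, b, hab, ha, hb⟩ => ⟨a, ha, b, hb, hab⟩⟩

namespace OneSided

variable {f : ℝ → ℝ} (hf : OneSided f)

include hf

theorem comp {F : ℝ → ℝ} (h₀ : F 0 = 0) : OneSided (F ∘ f) := by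
  obtain ⟨x₀, hx₀ | hx₀⟩ := hf
  · exact ⟨x₀, Or.inl fun x hx => by rw [Function.comp_apply, hx₀ x hx, h₀]⟩
  · exact ⟨x₀, Or.inr fun x hx => by rw [Function.comp_apply, hx₀ x hx, h₀]⟩

theorem exists_ne_eq_zero : ∃ a b : ℝ, a ≠ b ∧ f a = 0 ∧ f b = 0 := by
  obtain ⟨x₀, hx₀ | hx₀⟩ := hf
  · exact ⟨x₀ - 1, x₀ - 2, by simp, hx₀ _ (by linarith), hx₀ _ (by linarith)⟩
  · exact ⟨x₀ + 1, x₀ + 2, by simp, hx₀ _ (by linarith), hx₀ _ (by linarith)⟩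

end OneSided

theorem oneSided_indicator_compl {s : Set ℝ} (hs : IsUpperSet s ∨ IsLowerSet s) (hne : s.Nonempty)
    (g : ℝ → ℝ) : OneSided (sᶜ.indicator g) := by
  obtain ⟨a, ha⟩ := hne
  rcases hs with hs | hs
  · exact ⟨a, Or.inr fun x hx => indicator_of_notMem (notMem_compl_iff.2 (hs hx.le ha)) g⟩
  · exact ⟨a, Or.inl fun x hx => indicator_of_notMem (notMem_compl_iff.2 (hs hx.le ha)) g⟩

theorem isTNToeplitz_indicator_one {s : Set ℝ} (hs : IsUpperSet s ∨ IsLowerSet s) :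
    IsTNToeplitz (s.indicator (1 : ℝ → ℝ)) :=
  hs.elim IsTNToeplitz.indicator_isUpperSet IsTNToeplitz.indicator_isLowerSet

namespace IsTNFun

variable {f : ℝ → ℝ} (hf : IsTNFun f)

include hf

theorem nonneg (x : ℝ) : 0 ≤ f x := IsTNToeplitz.nonneg hf.2 x

theorem const_mul {c : ℝ} (hc : 0 ≤ c) : IsTNFun fun x => c * f x :=
  ⟨hf.1.const_mul c, IsTNKernel.const_mul hf.2 hc⟩

theorem indicator_support (hside : OneSided f) :
    IsTNFun ((Function.support f).indicator (1 : ℝ → ℝ)) := by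
  by_cases hsupp : (Function.support f).Nontrivial
  · exact ⟨measurable_one.indicator (measurableSet_support hf.1), isTNToeplitz_indicator_one
      (IsTNToeplitz.isUpperSet_or_isLowerSet_support hf.2 hside hsupp)⟩
  obtain ⟨d, hd, hfd⟩ : ∃ d : ℝ, 0 ≤ d ∧
      (Function.support f).indicator (1 : ℝ → ℝ) = fun x => d * f x := by
    rcases (not_nontrivial_iff.1 hsupp).eq_empty_or_singleton with hempty | ⟨a, ha⟩
    · refine ⟨0, le_rfl, ?_⟩
      simp only [hempty, indicator_empty, zero_mul]
    · refine ⟨(f a)⁻¹, inv_nonneg.2 (hf.nonneg a), funext fun x => ?_⟩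
      by_cases hx : f x = 0
      · simp [hx]
      · obtain rfl : x = a := ha.subset hx
        simp [hx]
  exact hfd ▸ hf.const_mul hd

theorem indicator_compl_support (hside : OneSided f) (hsupp : (Function.support f).Nontrivial) :
    IsTNFun ((Function.support f)ᶜ.indicator (1 : ℝ → ℝ)) :=
  ⟨measurable_one.indicator (measurableSet_support hf.1).compl, isTNToeplitz_indicator_one
    ((IsTNToeplitz.isUpperSet_or_isLowerSet_support hf.2 hside hsupp).symm.imp
      IsLowerSet.compl IsUpperSet.compl)⟩

variable {F : ℝ → ℝ} {c : ℝ} (hc : 0 < c)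

include hc

theorem comp_of_eq_const_mul (hF : ∀ x, 0 ≤ x → F x = c * x) : IsTNFun (F ∘ f) := by
  have hcomp : F ∘ f = fun x => c * f x := funext fun x => hF _ (hf.nonneg x)
  exact hcomp ▸ hf.const_mul hc.le

theorem comp_of_eq_ite_pos (hside : OneSided f) (hF : ∀ x, 0 ≤ x → F x = if 0 < x then c else 0) :
    IsTNFun (F ∘ f) := by
  have hcomp : F ∘ f = fun x => c * (Function.support f).indicator 1 x := funext fun x => by
    rw [Function.comp_apply, hF _ (hf.nonneg x)]
    by_cases hx : f x = 0 <;> simp [hx, (hf.nonneg x).lt_iff_ne']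
  exact hcomp ▸ (hf.indicator_support hside).const_mul hc.le

theorem comp_of_eq_ite_zero (hside : OneSided f) (hsupp : (Function.support f).Nontrivial)
    (hF : ∀ x, 0 ≤ x → F x = if x = 0 then c else 0) : IsTNFun (F ∘ f) ∧ OneSided (F ∘ f) := by
  have hcomp : F ∘ f = fun x => c * (Function.support f)ᶜ.indicator 1 x := funext fun x => by
    rw [Function.comp_apply, hF _ (hf.nonneg x)]
    by_cases hx : f x = 0 <;> simp [hx]
  rw [hcomp]
  exact ⟨(hf.indicator_compl_support hside hsupp).const_mul hc.le,
    (oneSided_indicator_compl (IsTNToeplitz.isUpperSet_or_isLowerSet_support hf.2 hside hsupp)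
      hsupp.nonempty 1).comp (F := fun y => c * y) (mul_zero c)⟩

end IsTNFun

variable {F : ℝ → ℝ}

theorem PreservesOneSidedTN.eq_zero_or_eq_const_mul_or_eq_ite (hF : PreservesOneSidedTN F) :
    (∀ x, 0 < x → F x = 0) ∨ ∃ c : ℝ, 0 < c ∧ ((∀ x, 0 ≤ x → F x = c * x) ∨
      ∀ x, 0 ≤ x → F x = if 0 < x then c else 0) := by
  refine or_iff_not_imp_left.2 fun hne => ?_
  push Not at hne
  obtain ⟨t, ht, hFt⟩ := hne
  have h₀ := hF.apply_zero ht hFt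
  obtain ⟨c, β, hc, hβ, hpow⟩ := hF.exists_eq_const_mul_rpow ht hFt
  refine ⟨c, hc, ?_⟩
  rcases hF.exponent_eq_zero_or_one hc h₀ hβ hpow with rfl | rfl
  · refine Or.inr fun x hx => ?_
    rcases hx.eq_or_lt with rfl | hx <;> simp [*]
  · refine Or.inl fun x hx => ?_
    rcases hx.eq_or_lt with rfl | hx <;> simp [*]

theorem not_integrable_of_eqOn_const {α : Type*} [MeasurableSpace α] {μ : Measure α} {g : α → ℝ}
    {c : ℝ} {s : Set α} (hs : MeasurableSet s) (hμ : μ s = ⊤) (hc : c ≠ 0)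
    (hg : EqOn g (fun _ => c) s) : ¬ Integrable g μ := fun hint => by
  have h := (integrableOn_congr_fun hg hs).1 hint.integrableOn
  simp [integrableOn_const_iff, hc, hμ] at h

theorem preserves_isPolyaFrequencyFunction_iff :
    (∀ Λ : ℝ → ℝ, IsPolyaFrequencyFunction Λ → OneSided Λ →
        (IsPolyaFrequencyFunction (F ∘ Λ) ∧ OneSided (F ∘ Λ))) ↔
      ∃ c : ℝ, 0 < c ∧ ∀ x : ℝ, 0 ≤ x → F x = c * x := by
  refine ⟨fun h => ?_, ?_⟩
  · have hF : PreservesOneSidedTN F := fun Λ hΛ =>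
      (h Λ hΛ.isPolyaFrequencyFunction hΛ.oneSided).imp_left fun hPF => hPF.2.2.2
    have htest := isOneSidedPolya_indicator_Ici_const_mul_exp_neg one_pos
    obtain ⟨⟨hint, -, ⟨a, -, -, ha, -⟩, -⟩, -⟩ :=
      h _ htest.isPolyaFrequencyFunction htest.oneSided
    rcases hF.eq_zero_or_eq_const_mul_or_eq_ite with hzero | ⟨c, hc, hlin | hconst⟩
    · have h₀ : F 0 ≠ 0 := fun h₀ =>
        ha ((htest.isTNFun.nonneg a).eq_or_lt.elim (fun h => (congrArg F h).symm.trans h₀)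
          (hzero _))
      refine absurd hint (not_integrable_of_eqOn_const measurableSet_Iio Real.volume_Iio h₀
        (s := Iio 0) fun x hx => ?_)
      rw [Function.comp_apply, indicator_of_notMem (notMem_Ici.2 hx)]
    · exact ⟨c, hc, hlin⟩
    · refine absurd hint (not_integrable_of_eqOn_const measurableSet_Ioi Real.volume_Ioi hc.ne'
        (s := Ioi 0) fun x hx => ?_)
      rw [Function.comp_apply, indicator_of_mem (Ioi_subset_Ici_self hx),
        hconst _ (by positivity), if_pos (by positivity)]
  · rintro ⟨c, hc, hlin⟩ Λ ⟨hint, hpos, ⟨a, b, hab, ha, hb⟩, htn⟩ hside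
    have hcomp : F ∘ Λ = fun x => c * Λ x := funext fun x => hlin _ (hpos x)
    refine ⟨?_, hside.comp (by simpa using hlin 0 le_rfl)⟩
    rw [hcomp]
    exact ⟨hint.const_mul c, fun x => mul_nonneg hc.le (hpos x),
      ⟨a, b, hab, mul_ne_zero hc.ne' ha, mul_ne_zero hc.ne' hb⟩, IsTNKernel.const_mul htn hc.le⟩

theorem preserves_isTNFun_nontrivial_iff (hF₀ : 0 ≤ F 0) :
    (∀ f : ℝ → ℝ, IsTNFun f → OneSided f → (∃ a b : ℝ, a ≠ b ∧ f a ≠ 0 ∧ f b ≠ 0) →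
        (IsTNFun (F ∘ f) ∧ OneSided (F ∘ f) ∧
          ∃ a b : ℝ, a ≠ b ∧ F (f a) ≠ 0 ∧ F (f b) ≠ 0)) ↔
      ∃ c : ℝ, 0 < c ∧
        ((∀ x : ℝ, 0 ≤ x → F x = c * x) ∨
         (∀ x : ℝ, 0 ≤ x → F x = if 0 < x then c else 0) ∨
         (∀ x : ℝ, 0 ≤ x → F x = if x = 0 then c else 0)) := by
  refine ⟨fun h => ?_, ?_⟩
  · have hF : PreservesOneSidedTN F := fun Λ hΛ =>
      (h Λ hΛ.isTNFun hΛ.oneSided hΛ.nontrivial_support).imp And.right And.left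
    rcases hF.eq_zero_or_eq_const_mul_or_eq_ite with hzero | ⟨c, hc, hlin | hconst⟩
    · have htest := isOneSidedPolya_indicator_Ici_const_mul_exp_neg one_pos
      obtain ⟨-, -, a, -, -, ha, -⟩ := h _ htest.isTNFun htest.oneSided htest.nontrivial_support
      have h₀ : F 0 ≠ 0 := fun h₀ =>
        ha ((htest.isTNFun.nonneg a).eq_or_lt.elim (fun h => h ▸ h₀) (hzero _))
      refine ⟨F 0, hF₀.lt_of_ne' h₀, Or.inr (Or.inr fun x hx => ?_)⟩
      rcases hx.eq_or_lt with rfl | hx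
      · rw [if_pos rfl]
      · rw [if_neg hx.ne', hzero x hx]
    · exact ⟨c, hc, Or.inl hlin⟩
    · exact ⟨c, hc, Or.inr (Or.inl hconst)⟩
  · rintro ⟨c, hc, hlin | hpos | hzero⟩ f hf hside ⟨a, b, hab, ha, hb⟩
    · have hne {x : ℝ} (hx : f x ≠ 0) : F (f x) ≠ 0 :=
        hlin _ (hf.nonneg x) ▸ mul_ne_zero hc.ne' hx
      exact ⟨hf.comp_of_eq_const_mul hc hlin, hside.comp (by simpa using hlin 0 le_rfl),
        a, b, hab, hne ha, hne hb⟩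
    · have hne {x : ℝ} (hx : f x ≠ 0) : F (f x) ≠ 0 := by
        rw [hpos _ (hf.nonneg x), if_pos ((hf.nonneg x).lt_of_ne' hx)]
        exact hc.ne'
      exact ⟨hf.comp_of_eq_ite_pos hc hside hpos, hside.comp (by simpa using hpos 0 le_rfl),
        a, b, hab, hne ha, hne hb⟩
    · have hne {x : ℝ} (hx : f x = 0) : F (f x) ≠ 0 := by
        rw [hzero _ (hf.nonneg x), if_pos hx]
        exact hc.ne'
      obtain ⟨p, q, hpq, hp, hq⟩ := hside.exists_ne_eq_zero
      obtain ⟨htn, hside'⟩ := hf.comp_of_eq_ite_zero hc hside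
        (nontrivial_support_iff.2 ⟨a, b, hab, ha, hb⟩) hzero
      exact ⟨htn, hside', p, q, hpq, hne hp, hne hq⟩

theorem preserves_isTNFun_iff (hne : ∃ x, 0 ≤ x ∧ F x ≠ 0) :
    (∀ f : ℝ → ℝ, IsTNFun f → OneSided f → (IsTNFun (F ∘ f) ∧ OneSided (F ∘ f))) ↔
      ∃ c : ℝ, 0 < c ∧
        ((∀ x : ℝ, 0 ≤ x → F x = c * x) ∨
         (∀ x : ℝ, 0 ≤ x → F x = if 0 < x then c else 0)) := by
  refine ⟨fun h => ?_, ?_⟩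
  · have hF : PreservesOneSidedTN F := fun Λ hΛ =>
      (h Λ hΛ.isTNFun hΛ.oneSided).imp_left And.right
    refine hF.eq_zero_or_eq_const_mul_or_eq_ite.resolve_left fun hzero => ?_
    obtain ⟨t, ht, hFt⟩ := hne
    rcases ht.eq_or_lt with rfl | ht
    · have hnull : IsTNFun fun _ => 0 := by
        simpa using isTNFun_indicator_Ici_const_mul_exp_neg (le_refl (0 : ℝ))
      obtain ⟨-, x, -, -, hx, -⟩ := And.imp_right OneSided.exists_ne_eq_zero
        (h _ hnull ⟨0, Or.inl fun _ _ => rfl⟩)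
      exact hFt hx
    · exact hFt (hzero t ht)
  · rintro ⟨c, hc, hlin | hpos⟩ f hf hside
    · exact ⟨hf.comp_of_eq_const_mul hc hlin, hside.comp (by simpa using hlin 0 le_rfl)⟩
    · exact ⟨hf.comp_of_eq_ite_pos hc hside hpos, hside.comp (by simpa using hpos 0 le_rfl)⟩

theorem stmt_18 (F : ℝ → ℝ) (hF0 : ∀ x : ℝ, 0 ≤ x → 0 ≤ F x) :
    -- (1) preservers of one-sided Pólya frequency functions
    ((∀ Λ : ℝ → ℝ, IsPolyaFrequencyFunction Λ → OneSided Λ →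
        (IsPolyaFrequencyFunction (F ∘ Λ) ∧ OneSided (F ∘ Λ))) ↔
      ∃ c : ℝ, 0 < c ∧ ∀ x : ℝ, 0 ≤ x → F x = c * x) ∧
    -- (2) preservers of one-sided TN functions non-zero at two or more points
    ((∀ f : ℝ → ℝ, IsTNFun f → OneSided f →
        (∃ a b : ℝ, a ≠ b ∧ f a ≠ 0 ∧ f b ≠ 0) →
        (IsTNFun (F ∘ f) ∧ OneSided (F ∘ f) ∧
          ∃ a b : ℝ, a ≠ b ∧ F (f a) ≠ 0 ∧ F (f b) ≠ 0)) ↔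
      ∃ c : ℝ, 0 < c ∧
        ((∀ x : ℝ, 0 ≤ x → F x = c * x) ∨
         (∀ x : ℝ, 0 ≤ x → F x = if 0 < x then c else 0) ∨
         (∀ x : ℝ, 0 ≤ x → F x = if x = 0 then c else 0))) ∧
    -- (3) preservers of one-sided TN functions, for non-zero F
    ((∃ x : ℝ, 0 ≤ x ∧ F x ≠ 0) →
      ((∀ f : ℝ → ℝ, IsTNFun f → OneSided f →
          (IsTNFun (F ∘ f) ∧ OneSided (F ∘ f))) ↔
        ∃ c : ℝ, 0 < c ∧
          ((∀ x : ℝ, 0 ≤ x → F x = c * x) ∨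
           (∀ x : ℝ, 0 ≤ x → F x = if 0 < x then c else 0)))) := by
  exact ⟨preserves_isPolyaFrequencyFunction_iff, preserves_isTNFun_nontrivial_iff (hF0 0 le_rfl),
    preserves_isTNFun_iff⟩
end

section
/- Let X and Y be infinite totally ordered sets such that there exists a totally positive kernel on X × Y. A function F : (0,∞) → (0,∞) satisfies that F∘K is totally positive for every totally positive kernel K : X × Y → ℝ if and only if F(x) = c·x for some c > 0. -/
/-- A kernel on linearly ordered sets is totally positive if all matrices
obtained by evaluating it on increasing tuples have positive determinant. -/
def IsTPKernel {X Y : Type*} [LinearOrder X] [LinearOrder Y] (K : X → Y → ℝ) : Prop :=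
  ∀ (n : ℕ) (x : Fin n → X) (y : Fin n → Y), StrictMono x → StrictMono y →
    0 < (Matrix.of fun i j : Fin n => K (x i) (y j)).det

/-!
The `2 × 2` minors force `F` to be a power law `c * x ^ α` with `0 < α`, since in logarithmic
coordinates `F` becomes strictly increasing and affine. To see that `α = 1`, let `φ` and `ψ` be
ratios of two columns and of two rows of a given totally positive kernel; they are positive and
strictly increasing, so power series in `φ` and `ψ` provide further totally positive kernels. For
such a kernel `1 + ε ^ 2 * (φ ^ 2 * ψ) + ε ^ 5 * (φ ^ 3 * ψ ^ 3) + ⋯`, the `α`-th power is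
`1 + α * ε ^ 2 * (φ ^ 2 * ψ) + α * (α - 1) / 2 * ε ^ 4 * (φ ^ 4 * ψ ^ 2) +
α * ε ^ 5 * (φ ^ 3 * ψ ^ 3) + o(ε ^ 5)`. As `ε → 0`, the leading term of a minor of this expansion
is the product of its first coefficients and of two generalized Vandermonde determinants. For
`α < 1` the third coefficient makes a `3 × 3` minor negative; for `1 < α` that coefficient is
positive, but then a `4 × 4` minor is negative, because `(4, 2)` and `(3, 3)` are ordered oppositely
in the two variables.
-/

open Filter Topology Asymptotics

section ExponentialSums

variable {n : ℕ} {a b c t : Fin n → ℝ}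

theorem hasDerivAt_sum_mul_exp {ι : Type*} [Fintype ι] (c b : ι → ℝ) (s : ℝ) :
    HasDerivAt (fun s => ∑ k, c k * Real.exp (b k * s))
      (∑ k, c k * b k * Real.exp (b k * s)) s := by
  refine HasDerivAt.fun_sum fun k _ => ?_
  simpa only [mul_assoc, mul_comm] using (hasDerivAt_const_mul (b k)).exp.const_mul (c k)

-- Rolle: dividing by one exponential and differentiating removes one term and at most one zero.
theorem eq_zero_of_sum_mul_exp_eq_zero (hb : Function.Injective b) (ht : StrictMono t)
    (h : ∀ i, ∑ k, c k * Real.exp (b k * t i) = 0) : c = 0 := by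
  induction n with
  | zero => exact Subsingleton.elim _ _
  | succ n ih =>
    have hzero : ∀ i, c 0 + ∑ k : Fin n, c k.succ * Real.exp ((b k.succ - b 0) * t i) = 0 := by
      intro i
      have hmul : Real.exp (b 0 * t i) *
          (c 0 + ∑ k : Fin n, c k.succ * Real.exp ((b k.succ - b 0) * t i)) = 0 := by
        rw [← h i, Fin.sum_univ_succ, mul_add, Finset.mul_sum, mul_comm]
        congr 1
        refine Finset.sum_congr rfl fun k _ => ?_
        rw [mul_left_comm, ← Real.exp_add]
        ring_nf
      exact (mul_eq_zero.1 hmul).resolve_left (Real.exp_ne_zero _)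
    have hderiv := fun s => (hasDerivAt_sum_mul_exp (fun k : Fin n => c k.succ)
      (fun k => b k.succ - b 0) s).const_add (c 0)
    have hrolle : ∀ i : Fin n, ∃ s ∈ Set.Ioo (t i.castSucc) (t i.succ),
        ∑ k : Fin n, c k.succ * (b k.succ - b 0) * Real.exp ((b k.succ - b 0) * s) = 0 := fun i =>
      exists_hasDerivAt_eq_zero (ht Fin.castSucc_lt_succ)
        (fun s _ => (hderiv s).continuousAt.continuousWithinAt)
        ((hzero _).trans (hzero _).symm) (fun s _ => hderiv s)
    choose s hs hs_zero using hrolle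
    have hs_mono : StrictMono s := fun i j hij =>
      (hs i).2.trans_le ((ht.monotone (Fin.succ_le_castSucc_iff.2 hij)).trans (hs j).1.le)
    have hb_ne : ∀ k : Fin n, b k.succ - b 0 ≠ 0 := fun k =>
      sub_ne_zero.2 (hb.ne (Fin.succ_ne_zero k))
    have hcoeff := ih (fun k l hkl => Fin.succ_injective n (hb (sub_left_injective hkl)))
      hs_mono hs_zero
    have hsucc : ∀ k : Fin n, c k.succ = 0 := fun k =>
      (mul_eq_zero.1 (congrFun hcoeff k)).resolve_right (hb_ne k)
    have hc_zero : c 0 = 0 := by simpa [hsucc] using hzero 0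
    exact funext (Fin.cases hc_zero hsucc)

theorem det_exp_mul_ne_zero (ha : StrictMono a) (hb : Function.Injective b) :
    (Matrix.of fun i j => Real.exp (a i * b j)).det ≠ 0 := by
  intro hdet
  obtain ⟨v, hv, hv_zero⟩ := Matrix.exists_mulVec_eq_zero_iff.2 hdet
  refine hv (eq_zero_of_sum_mul_exp_eq_zero hb ha fun i => ?_)
  simpa [Matrix.mulVec, dotProduct, mul_comm] using congrFun hv_zero i

theorem det_vandermonde_pos (ha : StrictMono a) : 0 < (Matrix.vandermonde a).det := by
  rw [Matrix.det_vandermonde]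
  exact Finset.prod_pos fun i _ => Finset.prod_pos fun j hj =>
    sub_pos.2 (ha (Finset.mem_Ioi.1 hj))

-- The segment from `b` to `0, 1, …, n - 1` consists of strictly increasing tuples, so the
-- determinant keeps the sign it has at the Vandermonde end.
theorem det_exp_mul_pos (ha : StrictMono a) (hb : StrictMono b) :
    0 < (Matrix.of fun i j => Real.exp (a i * b j)).det := by
  set B : ℝ → Fin n → ℝ := fun s j => (1 - s) * b j + s * (j : ℕ) with hB
  set f : ℝ → ℝ := fun s => (Matrix.of fun i j => Real.exp (a i * B s j)).det with hf
  have hB_mono : ∀ s ∈ Set.Icc (0 : ℝ) 1, StrictMono (B s) := by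
    intro s hs i j hij
    have hij_cast : ((i : ℕ) : ℝ) < (j : ℕ) := by exact_mod_cast hij
    have := hb hij
    simp only [hB]
    rcases hs.1.eq_or_lt with rfl | hs_pos
    · simpa using this
    · nlinarith [hs.2]
  have hf_cont : Continuous f := by
    refine Continuous.matrix_det (continuous_matrix fun i j => ?_)
    simp only [hB, Matrix.of_apply]
    fun_prop
  have hf_one : 0 < f 1 := by
    have hvand : (Matrix.of fun i j => Real.exp (a i * B 1 j)) =
        Matrix.vandermonde fun i => Real.exp (a i) := by
      ext i j
      simp [hB, Matrix.vandermonde_apply, ← Real.exp_nat_mul, mul_comm]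
    simp only [hf, hvand]
    exact det_vandermonde_pos (Real.exp_strictMono.comp ha)
  have hf_zero : f 0 = (Matrix.of fun i j => Real.exp (a i * b j)).det := by simp [hf, hB]
  rw [← hf_zero]
  by_contra! hneg
  obtain ⟨s, hs, hfs⟩ :=
    intermediate_value_Icc zero_le_one hf_cont.continuousOn ⟨hneg, hf_one.le⟩
  exact det_exp_mul_ne_zero ha (hB_mono s hs).injective hfs

end ExponentialSums

section CauchyBinet

variable {ι κ R : Type*} [Fintype ι] [DecidableEq ι] [CommRing R]

theorem det_sum_mul_eq_sum_prod_mul_det (T : Finset κ) (A : ι → κ → R) (B : κ → ι → R) :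
    (Matrix.of fun i j => ∑ k ∈ T, A i k * B k j).det =
      ∑ f ∈ Fintype.piFinset fun _ : ι => T,
        (∏ i, A i (f i)) * (Matrix.of fun i j => B (f i) j).det := by
  have hrows : (Matrix.of fun i j => ∑ k ∈ T, A i k * B k j) = fun i => ∑ k ∈ T, A i k • B k := by
    ext i j
    simp
  rw [hrows]
  refine (MultilinearMap.map_sum_finset (Matrix.detRowAlternating (R := R)).toMultilinearMap
    (fun i k => A i k • B k) fun _ => T).trans (Finset.sum_congr rfl fun f _ => ?_)
  exact MultilinearMap.map_smul_univ _ (fun i => A i (f i)) fun i => B (f i)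

/- The form of the Cauchy–Binet formula that sums over all maps instead of `n`-element subsets,
each subset being hit by `n!` injective maps and the other maps contributing zero. -/
theorem factorial_mul_det_sum_mul (T : Finset κ) (A : ι → κ → R) (B : κ → ι → R) :
    ((Fintype.card ι).factorial : R) * (Matrix.of fun i j => ∑ k ∈ T, A i k * B k j).det =
      ∑ f ∈ Fintype.piFinset fun _ : ι => T,
        (Matrix.of fun i j => A i (f j)).det * (Matrix.of fun i j => B (f i) j).det := by
  have hperm : ∀ σ : Equiv.Perm ι, (Matrix.of fun i j => ∑ k ∈ T, A i k * B k j).det =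
      ∑ f ∈ Fintype.piFinset fun _ : ι => T, ((Equiv.Perm.sign σ : ℤ) : R) *
        (∏ i, A i (f (σ i))) * (Matrix.of fun i j => B (f i) j).det := by
    intro σ
    rw [det_sum_mul_eq_sum_prod_mul_det]
    symm
    refine Finset.sum_equiv (Equiv.arrowCongr σ.symm (Equiv.refl κ)) (fun f => ?_) fun f _ => ?_
    · simp only [Fintype.mem_piFinset, Equiv.arrowCongr_apply, Equiv.coe_refl, Equiv.symm_symm,
        Function.comp_apply, id]
      exact σ.forall_congr_right.symm
    · have := Matrix.det_permute σ (Matrix.of fun i j => B (f i) j)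
      change _ = (∏ i, A i (f (σ i))) * ((Matrix.of fun i j => B (f i) j).submatrix σ id).det
      rw [this]
      ring
  calc ((Fintype.card ι).factorial : R) * (Matrix.of fun i j => ∑ k ∈ T, A i k * B k j).det
      = ∑ _σ : Equiv.Perm ι, (Matrix.of fun i j => ∑ k ∈ T, A i k * B k j).det := by
        simp [Finset.card_univ, Fintype.card_perm]
    _ = _ := by
        rw [Finset.sum_congr rfl fun σ _ => hperm σ, Finset.sum_comm]
        refine Finset.sum_congr rfl fun f _ => ?_
        rw [← Finset.sum_mul, ← Matrix.det_transpose (Matrix.of fun i j => A i (f j)),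
          Matrix.det_apply' (Matrix.transpose _)]
        rfl

end CauchyBinet

namespace IsTPKernel

variable {X Y Z : Type*} [LinearOrder X] [LinearOrder Y] [LinearOrder Z]
  {K : X → Y → ℝ} {A : X → Z → ℝ} {B : Z → Y → ℝ}

theorem pos (hK : IsTPKernel K) (x : X) (y : Y) : 0 < K x y := by
  simpa using
    hK 1 (fun _ => x) (fun _ => y) (Subsingleton.strictMono _) (Subsingleton.strictMono _)

theorem mul_lt_mul (hK : IsTPKernel K) {x x' : X} {y y' : Y} (hx : x < x') (hy : y < y') :
    K x y' * K x' y < K x y * K x' y' := by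
  simpa [Matrix.det_fin_two] using
    hK 2 ![x, x'] ![y, y'] (by simp [Fin.strictMono_iff_lt_succ, hx])
      (by simp [Fin.strictMono_iff_lt_succ, hy])

theorem swap (hK : IsTPKernel K) : IsTPKernel fun y x => K x y := by
  intro n y x hy hx
  rw [← Matrix.det_transpose]
  exact hK n x y hx hy

theorem mul_mul (hK : IsTPKernel K) {u : X → ℝ} {v : Y → ℝ} (hu : ∀ x, 0 < u x)
    (hv : ∀ y, 0 < v y) : IsTPKernel fun x y => u x * (v y * K x y) := by
  intro n x y hx hy
  have hrow := Matrix.det_mul_column (fun i => u (x i))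
    (Matrix.of fun i j : Fin n => v (y j) * K (x i) (y j))
  have hcol := Matrix.det_mul_row (fun j => v (y j)) (Matrix.of fun i j : Fin n => K (x i) (y j))
  simp only [Matrix.of_apply] at hrow hcol
  rw [hrow, hcol]
  exact mul_pos (Finset.prod_pos fun i _ => hu _)
    (mul_pos (Finset.prod_pos fun i _ => hv _) (hK n x y hx hy))

theorem const_mul (hK : IsTPKernel K) {c : ℝ} (hc : 0 < c) : IsTPKernel fun x y => c * K x y := by
  simpa only [one_mul] using
    hK.mul_mul (u := fun _ => c) (v := fun _ => 1) (fun _ => hc) fun _ => one_pos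

theorem strictMono_div (hK : IsTPKernel K) {y y' : Y} (hy : y < y') :
    StrictMono fun x => K x y' / K x y := by
  intro x x' hx
  have := hK.mul_lt_mul hx hy
  simp only [div_lt_div_iff₀ (hK.pos _ _) (hK.pos _ _)]
  linarith

-- Sorting the values of `f` multiplies both determinants by the same sign.
theorem det_mul_det_nonneg (hA : IsTPKernel A) (hB : IsTPKernel B) {n : ℕ} {x : Fin n → X}
    {y : Fin n → Y} (hx : StrictMono x) (hy : StrictMono y) (f : Fin n → Z) :
    0 ≤ (Matrix.of fun i j => A (x i) (f j)).det * (Matrix.of fun i j => B (f i) (y j)).det := by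
  by_cases hf : Function.Injective f
  · set σ := Tuple.sort f
    have hmono : StrictMono (f ∘ σ) :=
      (Tuple.monotone_sort f).strictMono_of_injective (hf.comp σ.injective)
    have hprod := mul_pos (hA n x _ hx hmono) (hB n _ y hmono hy)
    change 0 < ((Matrix.of fun i j => A (x i) (f j)).submatrix id σ).det *
      ((Matrix.of fun i j => B (f i) (y j)).submatrix σ id).det at hprod
    rw [Matrix.det_permute', Matrix.det_permute] at hprod
    rw [mul_mul_mul_comm, ← Int.cast_mul, Int.units_coe_mul_self, Int.cast_one, one_mul] at hprod
    exact hprod.le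
  · obtain ⟨i, j, hij, hne⟩ := Function.not_injective_iff.1 hf
    rw [Matrix.det_zero_of_column_eq hne fun k => by simp [hij], zero_mul]

theorem of_hasSum [Infinite Z] (hA : IsTPKernel A) (hB : IsTPKernel B)
    (hK : ∀ x y, HasSum (fun z => A x z * B z y) (K x y)) : IsTPKernel K := by
  classical
  intro n x y hx hy
  obtain ⟨S, hS⟩ := Infinite.exists_subset_card_eq Z n
  set z := S.orderEmbOfFin hS
  set δ := (Matrix.of fun i j => A (x i) (z j)).det * (Matrix.of fun i j => B (z i) (y j)).det
  have hδ : 0 < δ := mul_pos (hA n x z hx z.strictMono) (hB n z y z.strictMono hy)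
  have hbound : ∀ T ≥ S,
      δ ≤ n.factorial * (Matrix.of fun i j => ∑ k ∈ T, A (x i) k * B k (y j)).det := by
    intro T hT
    have hCB := factorial_mul_det_sum_mul T (fun i => A (x i)) (fun k j => B k (y j))
    rw [Fintype.card_fin] at hCB
    rw [hCB]
    exact Finset.single_le_sum (f := fun f : Fin n → Z => (Matrix.of fun i j => A (x i) (f j)).det *
      (Matrix.of fun i j => B (f i) (y j)).det) (fun f _ => hA.det_mul_det_nonneg hB hx hy f)
      (Fintype.mem_piFinset.2 fun i => hT (S.orderEmbOfFin_mem hS i))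
  have hlim : Tendsto
      (fun T => n.factorial * (Matrix.of fun i j => ∑ k ∈ T, A (x i) k * B k (y j)).det)
      atTop (𝓝 (n.factorial * (Matrix.of fun i j => K (x i) (y j)).det)) := by
    refine Tendsto.const_mul _ (((Continuous.matrix_det continuous_id).tendsto _).comp ?_)
    exact tendsto_pi_nhds.2 fun i => tendsto_pi_nhds.2 fun j => hK (x i) (y j)
  have hdet := hδ.trans_le (ge_of_tendsto hlim ((eventually_ge_atTop S).mono hbound))
  exact pos_of_mul_pos_right hdet (by positivity)

end IsTPKernel
section ExampleKernels

variable {X Y : Type*} [LinearOrder X] [LinearOrder Y] {φ : X → ℝ} {ψ : Y → ℝ}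

theorem isTPKernel_exp_mul (hφ : StrictMono φ) (hψ : StrictMono ψ) :
    IsTPKernel fun x y => Real.exp (φ x * ψ y) :=
  fun _ _ _ hx hy => det_exp_mul_pos (hφ.comp hx) (hψ.comp hy)

theorem isTPKernel_rpow (hφ : StrictMono φ) (hφ_pos : ∀ x, 0 < φ x) (hψ : StrictMono ψ) :
    IsTPKernel fun x y => φ x ^ ψ y := by
  simpa only [Real.rpow_def_of_pos (hφ_pos _)] using
    isTPKernel_exp_mul (fun x x' h => Real.log_lt_log (hφ_pos x) (hφ h)) hψ

theorem isTPKernel_pow (hφ : StrictMono φ) (hφ_pos : ∀ x, 0 < φ x) {m : Y → ℕ}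
    (hm : StrictMono m) : IsTPKernel fun x y => φ x ^ m y := by
  simpa only [Function.comp_apply, Real.rpow_natCast] using
    isTPKernel_rpow hφ hφ_pos (Nat.strictMono_cast.comp hm)

theorem isTPKernel_of_hasSum_pow (hφ : StrictMono φ) (hφ_pos : ∀ x, 0 < φ x) (hψ : StrictMono ψ)
    (hψ_pos : ∀ y, 0 < ψ y) {c : ℕ → ℝ} (hc : ∀ k, 0 < c k) {l m : ℕ → ℕ} (hl : StrictMono l)
    (hm : StrictMono m) {K : X → Y → ℝ}
    (hK : ∀ x y, HasSum (fun k => c k * (φ x ^ l k * ψ y ^ m k)) (K x y)) : IsTPKernel K := by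
  refine (isTPKernel_pow hφ hφ_pos hl).of_hasSum ((isTPKernel_pow hψ hψ_pos hm).swap.mul_mul
    (v := fun _ => 1) hc fun _ => one_pos) fun x y => (hK x y).congr_fun fun k => ?_
  ring

-- Geometric interpolation between the four prescribed values.
theorem exists_isTPKernel_of_mul_lt_mul (hφ : StrictMono φ) (hψ : StrictMono ψ) {x x' : X}
    {y y' : Y} (hx : x < x') (hy : y < y') {a b c d : ℝ} (ha : 0 < a) (hb : 0 < b) (hc : 0 < c)
    (h : b * c < a * d) :
    ∃ K : X → Y → ℝ, IsTPKernel K ∧ K x y = a ∧ K x y' = b ∧ K x' y = c ∧ K x' y' = d := by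
  have hd : 0 < d := pos_of_mul_pos_right ((mul_pos hb hc).trans h) ha.le
  set r := a * d / (b * c) with hr
  have hr_one : 1 < r := (one_lt_div (mul_pos hb hc)).2 h
  have hφ_sub : 0 < φ x' - φ x := sub_pos.2 (hφ hx)
  have hψ_sub : 0 < ψ y' - ψ y := sub_pos.2 (hψ hy)
  set p : X → ℝ := fun z => (φ z - φ x) / (φ x' - φ x) with hp
  set q : Y → ℝ := fun w => (ψ w - ψ y) / (ψ y' - ψ y) with hq
  have hp_mono : StrictMono p := fun z z' hz =>
    div_lt_div_of_pos_right (sub_lt_sub_right (hφ hz) _) hφ_sub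
  have hq_mono : StrictMono q := fun w w' hw =>
    div_lt_div_of_pos_right (sub_lt_sub_right (hψ hw) _) hψ_sub
  have hp_zero : p x = 0 := by simp [hp]
  have hp_one : p x' = 1 := div_self hφ_sub.ne'
  have hq_zero : q y = 0 := by simp [hq]
  have hq_one : q y' = 1 := div_self hψ_sub.ne'
  have hTP : IsTPKernel fun z w => (r ^ p z) ^ q w :=
    isTPKernel_rpow (fun z z' hz => Real.rpow_lt_rpow_of_exponent_lt hr_one (hp_mono hz))
      (fun z => by positivity) hq_mono
  refine ⟨_, (hTP.mul_mul (u := fun z => (c / a) ^ p z) (v := fun w => (b / a) ^ q w)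
    (fun z => by positivity) fun w => by positivity).const_mul ha, ?_, ?_, ?_, ?_⟩ <;>
    simp only [hp_zero, hp_one, hq_zero, hq_one, Real.rpow_zero, Real.rpow_one, hr] <;>
    field_simp

end ExampleKernels

section PowerLaw

theorem exists_eq_add_mul_of_add_lt_add {g : ℝ → ℝ}
    (hg : ∀ s t u v, u + v < s + t → g u + g v < g s + g t) :
    ∃ α β : ℝ, 0 < α ∧ ∀ s, g s = β + s * α := by
  have hmono : StrictMono g := fun s t hst => by linarith [hg t 0 s 0 (by linarith)]
  obtain ⟨p, hp⟩ : ∃ p, ContinuousAt g p := by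
    by_contra! hdisc
    exact Set.not_countable_univ
      (hmono.monotone.countable_not_continuousAt.mono fun x _ => hdisc x)
  have hp_shift : ContinuousAt (fun e => g (p + e)) 0 :=
    ContinuousAt.comp (g := g) (by simpa using hp) (by fun_prop)
  have hp_lim : Tendsto (fun e => g (p + e)) (𝓝 0) (𝓝 (g p)) := by
    simpa [ContinuousAt] using hp_shift
  have hsum : ∀ s t, g (p + (s + t)) + g p = g (p + s) + g (p + t) := by
    intro s t
    apply le_antisymm
    · refine le_of_tendsto ((hp_lim.mono_left nhdsWithin_le_nhds).const_add _)
        (Filter.mem_of_superset (self_mem_nhdsWithin (s := Set.Iio 0)) fun e (he : e < 0) => ?_)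
      exact (hg _ _ _ _ (by linarith)).le
    · refine ge_of_tendsto ((hp_lim.mono_left nhdsWithin_le_nhds).const_add _)
        (Filter.mem_of_superset (self_mem_nhdsWithin (s := Set.Ioi 0)) fun e (he : 0 < e) => ?_)
      exact (hg _ _ _ _ (by linarith)).le
  let h : ℝ →+ ℝ := AddMonoidHom.mk' (fun s => g (p + s) - g p) fun s t => by linarith [hsum s t]
  have hcont : Continuous h :=
    continuous_of_continuousAt_zero h (hp_shift.sub continuousAt_const)
  have hlin : ∀ s, g (p + s) - g p = s * (g (p + 1) - g p) := fun s => by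
    simpa [h] using map_real_smul h hcont s 1
  refine ⟨g (p + 1) - g p, g p - p * (g (p + 1) - g p), sub_pos.2 (hmono (by linarith)),
    fun s => ?_⟩
  have := hlin (s - p)
  rw [add_sub_cancel] at this
  linarith

theorem exists_eq_mul_rpow_of_mul_lt_mul {F : ℝ → ℝ} (hF : ∀ x, 0 < x → 0 < F x)
    (h : ∀ a b c d : ℝ, 0 < a → 0 < b → 0 < c → 0 < d → b * c < a * d → F b * F c < F a * F d) :
    ∃ c α : ℝ, 0 < c ∧ 0 < α ∧ ∀ x, 0 < x → F x = c * x ^ α := by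
  have hF_exp : ∀ s, 0 < F (Real.exp s) := fun s => hF _ (Real.exp_pos s)
  obtain ⟨α, β, hα, hαβ⟩ :=
    exists_eq_add_mul_of_add_lt_add (g := fun s => Real.log (F (Real.exp s))) fun s t u v huv => by
      simp only [← Real.log_mul (hF_exp _).ne' (hF_exp _).ne']
      refine Real.log_lt_log (mul_pos (hF_exp u) (hF_exp v)) (h _ _ _ _ (Real.exp_pos s)
        (Real.exp_pos u) (Real.exp_pos v) (Real.exp_pos t) ?_)
      simpa only [← Real.exp_add, Real.exp_lt_exp] using huv
  refine ⟨Real.exp β, α, Real.exp_pos β, hα, fun x hx => ?_⟩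
  have hlog : Real.log (F x) = β + Real.log x * α := by
    simpa only [Real.exp_log hx] using hαβ (Real.log x)
  rw [Real.rpow_def_of_pos hx, ← Real.exp_add, ← hlog, Real.exp_log (hF x hx)]

end PowerLaw

section LeadingTerms

variable {ι γ 𝕜 : Type*} [Fintype ι] [DecidableEq ι] [NormedField 𝕜] {l : Filter γ}

theorem tendsto_det_div_prod {P Q : Matrix ι ι 𝕜} (hP : IsUnit P.det) (hQ : IsUnit Q.det)
    (d : ι → 𝕜) {s : ι → γ → 𝕜} (hs : ∀ k, ∀ᶠ a in l, s k a ≠ 0) {H : γ → Matrix ι ι 𝕜}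
    (hH : ∀ i j k,
      (fun a => (H a - P * Matrix.diagonal (fun m => d m * s m a) * Q) i j) =o[l] s k) :
    Tendsto (fun a => (H a).det / ∏ k, s k a) l (𝓝 (P.det * (∏ k, d k) * Q.det)) := by
  set D : γ → Matrix ι ι 𝕜 := fun a => Matrix.diagonal fun k => d k * s k a with hD
  set R : γ → Matrix ι ι 𝕜 := fun a => P⁻¹ * (H a - P * D a * Q) * Q⁻¹ with hR
  have hH_eq : ∀ a, H a = P * (D a + R a) * Q := by
    intro a
    simp only [hR, Matrix.mul_add, Matrix.add_mul, Matrix.mul_assoc, Matrix.nonsing_inv_mul _ hQ,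
      Matrix.mul_nonsing_inv_cancel_left _ _ hP, Matrix.mul_one]
    abel
  have hR_small : ∀ i j k, (fun a => R a i j) =o[l] s k := by
    intro i j k
    simp only [hR, Matrix.mul_apply (N := Q⁻¹), Matrix.mul_apply (M := P⁻¹), Finset.sum_mul]
    refine IsLittleO.fun_sum fun q _ => IsLittleO.fun_sum fun p _ => ?_
    exact ((hH p q k).const_mul_left (P⁻¹ i p * Q⁻¹ q j)).congr_left fun a => by ring
  have hscaled : Tendsto (fun a => Matrix.diagonal (fun k => (s k a)⁻¹) * (D a + R a)) l
      (𝓝 (Matrix.diagonal d)) := by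
    refine tendsto_pi_nhds.2 fun i => tendsto_pi_nhds.2 fun j => ?_
    have hlim := ((hR_small i j i).tendsto_div_nhds_zero).const_add (Matrix.diagonal d i j)
    rw [add_zero] at hlim
    refine hlim.congr' ((hs i).mono fun a ha => ?_)
    dsimp only
    rw [Matrix.diagonal_mul, Matrix.add_apply, mul_add, div_eq_inv_mul]
    congr 1
    rcases eq_or_ne i j with rfl | hij
    · simp [hD, mul_comm (d i), inv_mul_cancel_left₀ ha]
    · simp [hD, hij]
  have hdet := (((Continuous.matrix_det continuous_id).tendsto _).comp hscaled).const_mul P.det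
    |>.mul_const Q.det
  simp only [id, Matrix.det_diagonal] at hdet
  refine hdet.congr fun a => ?_
  simp only [Function.comp_apply, hH_eq a, Matrix.det_mul, Matrix.det_diagonal,
    Finset.prod_inv_distrib]
  ring

theorem det_mul_prod_mul_det_nonneg_of_isLittleO {X Y : Type*} [LinearOrder X] [LinearOrder Y]
    [NeBot l] {K : γ → X → Y → ℝ} (hK : ∀ᶠ a in l, IsTPKernel (K a)) {n : ℕ} {A : X → Fin n → ℝ}
    {B : Fin n → Y → ℝ} {d : Fin n → ℝ} {s : Fin n → γ → ℝ} (hs : ∀ k, ∀ᶠ a in l, 0 < s k a)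
    (hexp : ∀ x y k, (fun a => K a x y - ∑ m, d m * s m a * (A x m * B m y)) =o[l] s k)
    {x : Fin n → X} {y : Fin n → Y} (hx : StrictMono x) (hy : StrictMono y)
    (hA : (Matrix.of fun i k => A (x i) k).det ≠ 0)
    (hB : (Matrix.of fun k j => B k (y j)).det ≠ 0) :
    0 ≤ (Matrix.of fun i k => A (x i) k).det * (∏ k, d k) *
      (Matrix.of fun k j => B k (y j)).det := by
  refine ge_of_tendsto (tendsto_det_div_prod hA.isUnit hB.isUnit d
    (fun k => (hs k).mono fun a ha => ha.ne') (H := fun a => Matrix.of fun i j => K a (x i) (y j))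
    fun i j k => (hexp (x i) (y j) k).congr_left fun a => ?_) ?_
  · simp only [Matrix.sub_apply, Matrix.of_apply, Matrix.mul_apply (N := Matrix.of _),
      Matrix.mul_diagonal]
    congr 1
    exact Finset.sum_congr rfl fun m _ => by ring
  · filter_upwards [hK, eventually_all.2 hs] with a hKa hsa
    exact div_nonneg (hKa n x y hx hy).le (Finset.prod_nonneg fun k _ => (hsa k).le)

end LeadingTerms
section TestKernel

/-- The test kernel in positive coordinates `a` and `b`. Its first correction `a ^ 2 * b` has
square `a ^ 4 * b ^ 2`, whose exponents are ordered oppositely to those of `a ^ 3 * b ^ 3` in the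
two variables; the exponential only makes the kernel totally positive of every order. -/
noncomputable def testKernel (ε a b : ℝ) : ℝ :=
  1 + ε ^ 2 * (a ^ 2 * b) + ε ^ 5 * (a ^ 3 * b ^ 3) * Real.exp (ε * (a * b))

theorem isTPKernel_testKernel {X Y : Type*} [LinearOrder X] [LinearOrder Y] {φ : X → ℝ}
    {ψ : Y → ℝ} (hφ : StrictMono φ) (hφ_pos : ∀ x, 0 < φ x) (hψ : StrictMono ψ)
    (hψ_pos : ∀ y, 0 < ψ y) {ε : ℝ} (hε : 0 < ε) :
    IsTPKernel fun x y => testKernel ε (φ x) (ψ y) := by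
  let c : ℕ → ℝ
    | 0 => 1
    | 1 => ε ^ 2
    | k + 2 => ε ^ 5 * (ε ^ k / k.factorial)
  let l : ℕ → ℕ
    | 0 => 0
    | k + 1 => k + 2
  let m : ℕ → ℕ
    | 0 => 0
    | 1 => 1
    | k + 2 => k + 3
  have hc : ∀ k, 0 < c k := by
    rintro (_ | _ | k) <;> simp only [c] <;> positivity
  have hl : StrictMono l := strictMono_nat_of_lt_succ (by rintro (_ | k) <;> simp [l])
  have hm : StrictMono m := strictMono_nat_of_lt_succ (by rintro (_ | _ | k) <;> simp [m])
  refine isTPKernel_of_hasSum_pow hφ hφ_pos hψ hψ_pos hc hl hm fun x y => ?_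
  have hexp := (NormedSpace.expSeries_div_hasSum_exp (ε * (φ x * ψ y))).mul_left
    (ε ^ 5 * (φ x ^ 3 * ψ y ^ 3))
  rw [← Real.exp_eq_exp_ℝ] at hexp
  have hrest : testKernel ε (φ x) (ψ y) - ∑ k ∈ Finset.range 2, c k * (φ x ^ l k * ψ y ^ m k) =
      ε ^ 5 * (φ x ^ 3 * ψ y ^ 3) * Real.exp (ε * (φ x * ψ y)) := by
    simp [Finset.sum_range_succ, testKernel, c, l, m]
  rw [← hasSum_nat_add_iff' 2, hrest]
  refine hexp.congr_fun fun k => ?_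
  simp only [c, l, m]
  ring

theorem one_add_rpow_sub_isBigO (α : ℝ) :
    (fun s : ℝ => (1 + s) ^ α - (1 + α * s + α * (α - 1) / 2 * s ^ 2)) =O[𝓝 0] (· ^ 3) := by
  have hchoose : Ring.choose α 2 = α * (α - 1) / 2 := by
    have := Ring.descPochhammer_eq_factorial_smul_choose α 2
    simp only [descPochhammer_succ_right, descPochhammer_zero, Nat.cast_zero, Nat.cast_one,
      sub_zero, one_mul, Polynomial.smeval_mul, Polynomial.smeval_X, Polynomial.smeval_sub,
      Polynomial.smeval_one, pow_zero, pow_one, one_smul, Nat.factorial_two, nsmul_eq_mul,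
      Nat.cast_ofNat] at this
    linarith
  refine ((Real.one_add_rpow_hasFPowerSeriesAt_zero (a := α)).isBigO_sub_partialSum_pow
    3).congr_left (fun s => ?_) |>.trans ?_
  · simp [FormalMultilinearSeries.partialSum, Finset.sum_range_succ, hchoose,
      -FormalMultilinearSeries.apply_eq_prod_smul_coeff]
  · simpa only [← norm_pow] using (isBigO_refl (fun s : ℝ => s ^ 3) (𝓝 0)).norm_left

theorem testKernel_rpow_sub_isLittleO (α a b : ℝ) :
    (fun ε => testKernel ε a b ^ α - (1 + α * ε ^ 2 * (a ^ 2 * b) +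
      α * (α - 1) / 2 * ε ^ 4 * (a ^ 4 * b ^ 2) + α * ε ^ 5 * (a ^ 3 * b ^ 3)))
      =o[𝓝 0] fun ε => ε ^ 5 := by
  set r : ℝ → ℝ := fun ε => a ^ 2 * b + ε ^ 3 * (a ^ 3 * b ^ 3) * Real.exp (ε * (a * b)) with hr
  have hr_cont : Continuous r := by fun_prop
  have hsmall : ∀ {q : ℝ → ℝ}, Continuous q → q 0 = 0 →
      (fun ε => ε ^ 5 * q ε) =o[𝓝 0] fun ε => ε ^ 5 := by
    intro q hq hq_zero
    have hq_lim := hq.tendsto 0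
    rw [hq_zero] at hq_lim
    simpa only [mul_one] using (isBigO_refl (fun ε : ℝ => ε ^ 5) (𝓝 0)).mul_isLittleO
      ((isLittleO_one_iff ℝ).2 hq_lim)
  have hs_lim : Tendsto (fun ε => ε ^ 2 * r ε) (𝓝 0) (𝓝 0) := by
    have hs_cont : Continuous fun ε => ε ^ 2 * r ε := by fun_prop
    simpa using hs_cont.tendsto 0
  have htaylor := ((one_add_rpow_sub_isBigO α).comp_tendsto hs_lim).trans_isLittleO
    ((hsmall (q := fun ε => ε * r ε ^ 3) (by fun_prop) (by simp)).congr_left fun ε => by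
      simp only [Function.comp_apply]; ring)
  have hlinear := (hsmall (q := fun ε => a ^ 3 * b ^ 3 * (Real.exp (ε * (a * b)) - 1))
    (by fun_prop) (by simp)).const_mul_left α
  have hquadratic := (hsmall (q := fun ε => ε ^ 2 * (a ^ 3 * b ^ 3 * Real.exp (ε * (a * b))) *
    (r ε + a ^ 2 * b)) (by fun_prop) (by simp)).const_mul_left (α * (α - 1) / 2)
  refine ((htaylor.add hlinear).add hquadratic).congr_left fun ε => ?_
  have htest : testKernel ε a b = 1 + ε ^ 2 * r ε := by
    simp only [testKernel, hr]
    ring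
  simp only [Function.comp_apply, htest]
  simp only [hr]
  ring

end TestKernel

section Preservers

variable {X Y : Type*} [LinearOrder X] [LinearOrder Y] {F G : ℝ → ℝ} {α : ℝ}

/-- `F` maps every totally positive kernel on `X × Y` to a totally positive kernel when applied
entrywise; only the values of `F` on `(0, ∞)` matter. -/
def PreservesTP (X Y : Type*) [LinearOrder X] [LinearOrder Y] (F : ℝ → ℝ) : Prop :=
  ∀ K : X → Y → ℝ, IsTPKernel K → IsTPKernel fun x y => F (K x y)

namespace PreservesTP

theorem of_eq_const_mul (hF : PreservesTP X Y F) {c : ℝ} (hc : 0 < c)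
    (hG : ∀ x, 0 < x → G x = c * F x) : PreservesTP X Y G := by
  intro K hK
  simpa only [hG _ (hK.pos _ _)] using (hF K hK).const_mul hc

variable {φ : X → ℝ} {ψ : Y → ℝ} (hφ : StrictMono φ) (hφ_pos : ∀ x, 0 < φ x)
  (hψ : StrictMono ψ) (hψ_pos : ∀ y, 0 < ψ y)

include hφ hψ

theorem exists_eq_mul_rpow [Nontrivial X] [Nontrivial Y] (hF : PreservesTP X Y F)
    (hF_pos : ∀ x, 0 < x → 0 < F x) :
    ∃ c α : ℝ, 0 < c ∧ 0 < α ∧ ∀ x, 0 < x → F x = c * x ^ α := by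
  obtain ⟨x, x', hx⟩ := exists_pair_lt X
  obtain ⟨y, y', hy⟩ := exists_pair_lt Y
  refine exists_eq_mul_rpow_of_mul_lt_mul hF_pos fun a b c d ha hb hc _ h => ?_
  obtain ⟨K, hK, rfl, rfl, rfl, rfl⟩ :=
    exists_isTPKernel_of_mul_lt_mul hφ hψ hx hy ha hb hc h
  exact (hF K hK).mul_lt_mul hx hy

include hφ_pos hψ_pos

theorem det_mul_prod_mul_det_nonneg {n : ℕ} {p q w : Fin n → ℕ} {W : ℕ} {d : Fin n → ℝ}
    (h : PreservesTP X Y (· ^ α)) (hw : ∀ k, w k ≤ W)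
    (hexp : ∀ a b : ℝ, (fun ε => testKernel ε a b ^ α - ∑ k, d k * ε ^ w k * (a ^ p k * b ^ q k))
      =o[𝓝 0] fun ε => ε ^ W)
    {x : Fin n → X} {y : Fin n → Y} (hx : StrictMono x) (hy : StrictMono y)
    (hP : (Matrix.of fun i k => φ (x i) ^ p k).det ≠ 0)
    (hQ : (Matrix.of fun k j => ψ (y j) ^ q k).det ≠ 0) :
    0 ≤ (Matrix.of fun i k => φ (x i) ^ p k).det * (∏ k, d k) *
      (Matrix.of fun k j => ψ (y j) ^ q k).det := by
  have hscale : ∀ k, (fun ε : ℝ => ε ^ W) =O[𝓝 0] fun ε => ε ^ w k := fun k =>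
    (hw k).eq_or_lt.elim (fun hk => hk ▸ isBigO_refl _ _) fun hk => (isLittleO_pow_pow hk).isBigO
  exact det_mul_prod_mul_det_nonneg_of_isLittleO (l := 𝓝[>] 0)
    (K := fun ε x y => testKernel ε (φ x) (ψ y) ^ α) (s := fun k ε => ε ^ w k)
    (A := fun x k => φ x ^ p k) (B := fun k y => ψ y ^ q k)
    (eventually_mem_nhdsWithin.mono fun ε hε =>
      h _ (isTPKernel_testKernel hφ hφ_pos hψ hψ_pos hε))
    (fun k => eventually_mem_nhdsWithin.mono fun ε hε => pow_pos hε _)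
    (fun x y k => ((hexp (φ x) (ψ y)).trans_isBigO (hscale k)).mono nhdsWithin_le_nhds)
    hx hy hP hQ

-- The `3 × 3` minors see the coefficient `α * (α - 1) / 2` of `φ ^ 4 * ψ ^ 2`.
theorem one_le_of_rpow (hα : 0 < α) (h : PreservesTP X Y (· ^ α)) {x : Fin 3 → X} {y : Fin 3 → Y}
    (hx : StrictMono x) (hy : StrictMono y) : 1 ≤ α := by
  have hP : 0 < (Matrix.of fun i k => φ (x i) ^ (![0, 2, 4] : Fin 3 → ℕ) k).det :=
    isTPKernel_pow hφ hφ_pos (by decide) 3 x id hx strictMono_id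
  have hQ : 0 < (Matrix.of fun k j => ψ (y j) ^ (![0, 1, 2] : Fin 3 → ℕ) k).det :=
    (isTPKernel_pow hψ hψ_pos (by decide)).swap 3 id y strictMono_id hy
  have hexp : ∀ a b : ℝ, (fun ε => testKernel ε a b ^ α - ∑ k, ![1, α, α * (α - 1) / 2] k *
      ε ^ (![0, 2, 4] : Fin 3 → ℕ) k * (a ^ (![0, 2, 4] : Fin 3 → ℕ) k *
        b ^ (![0, 1, 2] : Fin 3 → ℕ) k)) =o[𝓝 0] fun ε => ε ^ 4 := by
    intro a b
    have hpow : (fun ε : ℝ => ε ^ 5) =o[𝓝 0] fun ε => ε ^ 4 := isLittleO_pow_pow (by norm_num)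
    refine (((testKernel_rpow_sub_isLittleO α a b).trans hpow).add
      (hpow.const_mul_left (α * (a ^ 3 * b ^ 3)))).congr_left fun ε => ?_
    simp only [Fin.sum_univ_three, Matrix.cons_val_zero, Matrix.cons_val_one, Matrix.cons_val]
    ring
  have hnonneg := det_mul_prod_mul_det_nonneg hφ hφ_pos hψ hψ_pos h (by decide) hexp hx hy
    hP.ne' hQ.ne'
  have hprod : 0 ≤ α * (α * (α - 1) / 2) := by
    simpa [Fin.prod_univ_three] using
      nonneg_of_mul_nonneg_right (nonneg_of_mul_nonneg_left hnonneg hQ) hP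
  by_contra! hα_one
  have : 0 < 1 - α := sub_pos.2 hα_one
  have hneg : 0 < α * (α * (1 - α) / 2) := by positivity
  linarith

-- The `4 × 4` minors see that `φ ^ 4 * ψ ^ 2` and `φ ^ 3 * ψ ^ 3` are ordered oppositely.
theorem le_one_of_rpow (hα : 0 < α) (h : PreservesTP X Y (· ^ α)) {x : Fin 4 → X} {y : Fin 4 → Y}
    (hx : StrictMono x) (hy : StrictMono y) : α ≤ 1 := by
  have hP : (Matrix.of fun i k => φ (x i) ^ (![0, 2, 4, 3] : Fin 4 → ℕ) k).det < 0 := by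
    have hsorted : 0 < (Matrix.of fun i k => φ (x i) ^ (![0, 2, 3, 4] : Fin 4 → ℕ) k).det :=
      isTPKernel_pow hφ hφ_pos (by decide) 4 x id hx strictMono_id
    have hswap : (![0, 2, 4, 3] : Fin 4 → ℕ) = ![0, 2, 3, 4] ∘ Equiv.swap 2 3 := by decide
    have hdet := Matrix.det_permute' (Equiv.swap 2 3)
      (Matrix.of fun i k => φ (x i) ^ (![0, 2, 3, 4] : Fin 4 → ℕ) k)
    rw [Equiv.Perm.sign_swap (by decide)] at hdet
    rw [hswap]
    refine hdet.trans_lt ?_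
    simpa using hsorted
  have hQ : 0 < (Matrix.of fun k j => ψ (y j) ^ (![0, 1, 2, 3] : Fin 4 → ℕ) k).det :=
    (isTPKernel_pow hψ hψ_pos (by decide)).swap 4 id y strictMono_id hy
  have hexp : ∀ a b : ℝ, (fun ε => testKernel ε a b ^ α - ∑ k, ![1, α, α * (α - 1) / 2, α] k *
      ε ^ (![0, 2, 4, 5] : Fin 4 → ℕ) k * (a ^ (![0, 2, 4, 3] : Fin 4 → ℕ) k *
        b ^ (![0, 1, 2, 3] : Fin 4 → ℕ) k)) =o[𝓝 0] fun ε => ε ^ 5 := by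
    refine fun a b => (testKernel_rpow_sub_isLittleO α a b).congr_left fun ε => ?_
    simp only [Fin.sum_univ_four, Matrix.cons_val_zero, Matrix.cons_val_one, Matrix.cons_val]
    ring
  have hnonneg := det_mul_prod_mul_det_nonneg hφ hφ_pos hψ hψ_pos h (by decide) hexp hx hy
    hP.ne hQ.ne'
  have hprod : α * (α * (α - 1) / 2) * α ≤ 0 := by
    simpa [Fin.prod_univ_four] using
      nonpos_of_mul_nonneg_right (nonneg_of_mul_nonneg_left hnonneg hQ) hP
  by_contra! hα_one
  have : 0 < α - 1 := sub_pos.2 hα_one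
  exact hprod.not_gt (by positivity)

theorem exists_eq_const_mul (hF : PreservesTP X Y F) (hF_pos : ∀ x, 0 < x → 0 < F x)
    {x : Fin 4 → X} {y : Fin 4 → Y} (hx : StrictMono x) (hy : StrictMono y) :
    ∃ c : ℝ, 0 < c ∧ ∀ x, 0 < x → F x = c * x := by
  have : Nontrivial X := hx.injective.nontrivial
  have : Nontrivial Y := hy.injective.nontrivial
  obtain ⟨c, α, hc, hα, hF_eq⟩ := hF.exists_eq_mul_rpow hφ hψ hF_pos
  have hrpow : PreservesTP X Y (· ^ α) := hF.of_eq_const_mul (inv_pos.2 hc) fun x hx => by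
    rw [hF_eq x hx, inv_mul_cancel_left₀ hc.ne']
  have hα_one : α = 1 := le_antisymm
    (le_one_of_rpow hφ hφ_pos hψ hψ_pos hα hrpow hx hy)
    (one_le_of_rpow hφ hφ_pos hψ hψ_pos hα hrpow (hx.comp Fin.strictMono_castSucc)
      (hy.comp Fin.strictMono_castSucc))
  exact ⟨c, hc, fun x hx => by rw [hF_eq x hx, hα_one, Real.rpow_one]⟩

end PreservesTP

end Preservers

theorem exists_strictMono_of_le_card {X : Type*} [LinearOrder X] {n : ℕ}
    (h : (n : ℕ∞) ≤ ENat.card X) : ∃ x : Fin n → X, StrictMono x := by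
  obtain ⟨s, -, hs⟩ := Set.exists_subset_encard_eq ((Set.encard_univ X).symm ▸ h)
  have hfin : s.Finite := Set.finite_of_encard_eq_coe hs
  have hcard : hfin.toFinset.card = n := by
    rw [hfin.encard_eq_coe_toFinset_card] at hs
    exact_mod_cast hs
  exact ⟨_, (hfin.toFinset.orderEmbOfFin hcard).strictMono⟩

theorem stmt_19_general {X Y : Type*} [LinearOrder X] [LinearOrder Y] (hX : 4 ≤ ENat.card X)
    (hY : 4 ≤ ENat.card Y) (hXY : ∃ K : X → Y → ℝ, IsTPKernel K) {F : ℝ → ℝ}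
    (hF : ∀ x : ℝ, 0 < x → 0 < F x) :
    PreservesTP X Y F ↔ ∃ c : ℝ, 0 < c ∧ ∀ x : ℝ, 0 < x → F x = c * x := by
  obtain ⟨K, hK⟩ := hXY
  obtain ⟨x, hx⟩ := exists_strictMono_of_le_card (n := 4) hX
  obtain ⟨y, hy⟩ := exists_strictMono_of_le_card (n := 4) hY
  have hφ : StrictMono fun z => K z (y 1) / K z (y 0) := hK.strictMono_div (hy (by decide))
  have hψ : StrictMono fun w => K (x 1) w / K (x 0) w := hK.swap.strictMono_div (hx (by decide))
  refine ⟨fun h => h.exists_eq_const_mul hφ (fun z => div_pos (hK.pos _ _) (hK.pos _ _)) hψ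
    (fun w => div_pos (hK.pos _ _) (hK.pos _ _)) hF hx hy, ?_⟩
  rintro ⟨c, hc, hFc⟩
  have hid : PreservesTP X Y id := fun _ hL => hL
  exact hid.of_eq_const_mul hc hFc

theorem stmt_19 (X Y : Type*) [LinearOrder X] [LinearOrder Y]
    [Infinite X] [Infinite Y] (hXY : ∃ K : X → Y → ℝ, IsTPKernel K)
    (F : ℝ → ℝ) (hF : ∀ x : ℝ, 0 < x → 0 < F x) :
    (∀ K : X → Y → ℝ, IsTPKernel K → IsTPKernel fun a b => F (K a b)) ↔
      ∃ c : ℝ, 0 < c ∧ ∀ x : ℝ, 0 < x → F x = c * x :=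
  stmt_19_general (by simp) (by simp) hXY hF
end
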